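/- Let n ≥ 2 and let λ_1,…,λ_n be integers with 1 ≤ λ_j ≤ j for each 1 ≤ j ≤ n. Define the n-tuple of quadratic forms Q = (Q_1,…,Q_n) on ℝ^n by Q_j(ξ) = ξ_{λ_j} ξ_j, and for each 1 ≤ j ≤ n set w_j = #{1 ≤ i ≤ n : λ_i = j}. Then for all exponents p, q ∈ [1,∞] with q > max_j w_j + 3 and 1/p + (max_j w_j + 2)/q < 1, there exists a constant C = C(p,q,n,λ) such that ‖E^Q f‖_{L^q(ℝ^{2n})} ≤ C ‖f‖_{L^p([0,1]^n)} for every measurable function f : [0,1]^n → ℂ. -/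

import Mathlib

open MeasureTheory
open scoped ENNReal

/-- The extension operator associated to the quadratic surface
`S_Q = {(ξ, Q ξ) : ξ ∈ [0,1]^d} ⊆ ℝ^{d+n}`. -/
noncomputable def extOp (d n : ℕ) (Q : (Fin d → ℝ) → Fin n → ℝ)
    (f : (Fin d → ℝ) → ℂ) (x : Fin (d + n) → ℝ) : ℂ :=
  ∫ ξ in Set.Icc (0 : Fin d → ℝ) 1,
    Complex.exp (2 * (Real.pi : ℂ) * Complex.I *
      ((((∑ i : Fin d, x (Fin.castAdd n i) * ξ i) +
        ∑ j : Fin n, x (Fin.natAdd d j) * Q ξ j : ℝ)) : ℂ)) * f ξ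

open scoped FourierTransform Matrix

/-!
Broad–narrow analysis and induction on the constant. Cut the cube into cells of side `1 / K` and
compare, at each point, the largest contribution of a single cell with the rest. Either the
main contribution comes from pairs of cells that are separated in every coordinate direction, or
from cells that share a slab `ξ j ∈ [b, b + O(1 / K))` for some `j`.

For separated cells, `(ξ, η) ↦ (ξ + η, Q ξ + Q η)` is injective with Jacobian bounded below, because
`lam j ≤ j` makes the Jacobian matrix of `Q` triangular with `i`-th diagonal entry `ξ (lam i)` or
`2 * ξ i`; so Plancherel gives a bilinear `L²` estimate, and interpolation with the trivial `L^∞`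
bound gives all exponents `s ≥ 4`. A slab of width `δ` is rescaled to the whole cube, which
multiplies the constant by `δ ^ (s - 3 - w j)`. Summation over slabs costs nothing, as
they are disjoint. When `s > max w + 3`, a large `K` makes this factor beat
the combinatorial constants, which depend only on the dimension: the constant is at most half of
itself plus `O(1)`. Truncating in the variable dual to `Q ξ` makes it finite to begin with.

This settles `p = q = s`. The remaining exponents follow by interpolation with `L¹ → L^∞` and
Hölder's inequality on the cube.
-/

section Plancherel

variable {E F : Type*} [NormedAddCommGroup E] [MeasurableSpace E] [BorelSpace E]
  [InnerProductSpace ℝ E] [FiniteDimensional ℝ E]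
  [NormedAddCommGroup F] [InnerProductSpace ℂ F] [CompleteSpace F]

open scoped ContDiff in
theorem coeFn_fourier_toLp_two {f : E → F} (hf : Integrable f) (hf2 : MemLp f 2) :
    (𝓕 (hf2.toLp f) : Lp F 2 (volume : Measure E)) =ᵐ[volume] 𝓕 f := by
  have hcont : Continuous (𝓕 f) :=
    VectorFourier.fourierIntegral_continuous Real.continuous_fourierChar continuous_inner hf
  refine ae_eq_of_integral_contDiff_smul_eq ((Lp.memLp _).locallyIntegrable one_le_two)
    (hcont.locallyIntegrable (μ := volume)) fun g hg hgc ↦ ?_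
  have hcomplex : HasCompactSupport (Complex.ofRealCLM ∘ g) := hgc.comp_left rfl
  set φ := hcomplex.toSchwartzMap (Complex.ofRealCLM.contDiff.comp hg)
  have hdistr : ∫ x, (𝓕 φ) x • hf2.toLp f x =
      ∫ x, φ x • (𝓕 (hf2.toLp f) : Lp F 2 (volume : Measure E)) x := by
    have h := DFunLike.congr_fun (Lp.fourier_toTemperedDistribution_eq (hf2.toLp f)) φ
    rwa [TemperedDistribution.fourier_apply, Lp.toTemperedDistribution_apply,
      Lp.toTemperedDistribution_apply] at h
  have hself : ∫ x, (𝓕 φ) x • f x = ∫ x, φ x • 𝓕 f x := by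
    have h := VectorFourier.integral_fourierIntegral_smul_eq_flip (L := innerₗ E)
      (μ := volume) (ν := volume) Real.continuous_fourierChar continuous_inner φ.integrable hf
    rwa [flip_innerₗ] at h
  have hreal (u : E → F) : ∫ x, g x • u x = ∫ x, φ x • u x :=
    integral_congr_ae <| .of_forall fun x ↦ (Complex.coe_smul (g x) (u x)).symm
  rw [hreal, hreal, ← hdistr, ← hself]
  refine integral_congr_ae ?_
  filter_upwards [hf2.coeFn_toLp] with x hx using by rw [hx]

theorem eLpNorm_fourier_two_le {f : E → F} (hf : Integrable f) :
    eLpNorm (𝓕 f) 2 volume ≤ eLpNorm f 2 volume := by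
  by_cases hf2 : MemLp f 2 volume
  · rw [← eLpNorm_congr_ae (coeFn_fourier_toLp_two hf hf2), ← Lp.enorm_def,
      ← eLpNorm_congr_ae hf2.coeFn_toLp, ← Lp.enorm_def]
    exact (enorm_eq_iff_norm_eq.2 (Lp.norm_fourier_eq _)).le
  · rw [MemLp, not_and, not_lt_top_iff] at hf2
    exact (hf2 hf.1).symm ▸ le_top

theorem lintegral_enorm_fourier_sq_le {f : E → F} (hf : Integrable f) :
    ∫⁻ x, ‖𝓕 f x‖ₑ ^ 2 ≤ ∫⁻ x, ‖f x‖ₑ ^ 2 := by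
  have h := eLpNorm_fourier_two_le hf
  simp only [eLpNorm_eq_lintegral_rpow_enorm_toReal two_ne_zero ENNReal.ofNat_ne_top,
    ENNReal.toReal_ofNat, ENNReal.rpow_two] at h
  exact (ENNReal.rpow_le_rpow_iff (by norm_num)).1 h

theorem lintegral_enorm_fourier_pi_sq_le {ι : Type*} [Fintype ι] {f : (ι → ℝ) → F}
    (hf : Integrable f) :
    ∫⁻ x : ι → ℝ, ‖∫ z, 𝐞 (x ⬝ᵥ z) • f z‖ₑ ^ 2 ≤ ∫⁻ z, ‖f z‖ₑ ^ 2 := by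
  have hmp := PiLp.volume_preserving_ofLp ι
  have hme : MeasurableEmbedding (WithLp.ofLp : EuclideanSpace ℝ ι → ι → ℝ) :=
    (MeasurableEquiv.toLp 2 (ι → ℝ)).symm.measurableEmbedding
  have hneg := (Measure.measurePreserving_neg (volume : Measure (ι → ℝ)))
  have hfourier (x : EuclideanSpace ℝ ι) :
      𝓕 (fun v : EuclideanSpace ℝ ι ↦ f v.ofLp) x = ∫ z, 𝐞 (-x.ofLp ⬝ᵥ z) • f z := by
    rw [Real.fourier_eq, ← hmp.integral_comp hme]
    refine integral_congr_ae (.of_forall fun v ↦ ?_)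
    simp [EuclideanSpace.inner_eq_star_dotProduct]
  calc ∫⁻ x : ι → ℝ, ‖∫ z, 𝐞 (x ⬝ᵥ z) • f z‖ₑ ^ 2
      = ∫⁻ x : ι → ℝ, ‖∫ z, 𝐞 (-x ⬝ᵥ z) • f z‖ₑ ^ 2 :=
        (hneg.lintegral_comp_emb (MeasurableEquiv.neg _).measurableEmbedding _).symm
    _ = ∫⁻ x : EuclideanSpace ℝ ι, ‖𝓕 (fun v : EuclideanSpace ℝ ι ↦ f v.ofLp) x‖ₑ ^ 2 := by
        simp_rw [hfourier, ← hmp.lintegral_comp_emb hme]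
    _ ≤ ∫⁻ x : EuclideanSpace ℝ ι, ‖f x.ofLp‖ₑ ^ 2 :=
        lintegral_enorm_fourier_sq_le ((hmp.integrable_comp_emb hme).2 hf)
    _ = ∫⁻ z, ‖f z‖ₑ ^ 2 := hmp.lintegral_comp_emb hme (‖f ·‖ₑ ^ 2)

theorem lintegral_enorm_fourier_prod_sq_le {ι κ : Type*} [Fintype ι] [Fintype κ]
    {f : (ι → ℝ) × (κ → ℝ) → F} (hf : Integrable f) :
    ∫⁻ x : (ι → ℝ) × (κ → ℝ), ‖∫ z, 𝐞 (x.1 ⬝ᵥ z.1 + x.2 ⬝ᵥ z.2) • f z‖ₑ ^ 2 ≤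
      ∫⁻ z, ‖f z‖ₑ ^ 2 := by
  have hmp := volume_measurePreserving_sumPiEquivProdPi fun _ : ι ⊕ κ ↦ ℝ
  have hme := (MeasurableEquiv.sumPiEquivProdPi fun _ : ι ⊕ κ ↦ ℝ).measurableEmbedding
  have h := lintegral_enorm_fourier_pi_sq_le ((hmp.integrable_comp_emb hme).2 hf)
  rw [← hmp.lintegral_comp_emb hme, ← hmp.lintegral_comp_emb hme]
  refine Eq.trans_le (lintegral_congr fun x ↦ ?_) h
  rw [← hmp.integral_comp hme]
  simp [dotProduct, MeasurableEquiv.sumPiEquivProdPi, Equiv.sumPiEquivProdPi]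

end Plancherel

open scoped FourierTransform

theorem lintegral_comp_indicator {α β : Type*} {mα : MeasurableSpace α} {μ : Measure α} [Zero β]
    {s : Set α} (hs : MeasurableSet s) (f : α → β) {φ : β → ℝ≥0∞} (hφ : φ 0 = 0) :
    ∫⁻ x, φ (s.indicator f x) ∂μ = ∫⁻ x in s, φ (f x) ∂μ := by
  rw [← lintegral_indicator hs]
  exact lintegral_congr fun x ↦ congrFun (Set.indicator_comp_of_zero hφ).symm x

section ChangeOfVariables

variable {E F : Type*} [NormedAddCommGroup E] [NormedSpace ℝ E] [FiniteDimensional ℝ E]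
  [MeasurableSpace E] [BorelSpace E] {μ : Measure E} [μ.IsAddHaarMeasure]
  [NormedAddCommGroup F] [NormedSpace ℂ F]

theorem exists_density_of_injOn {Ω : Set E} (hΩ : MeasurableSet Ω) {Φ : E → E} {Φ' : E → E →L[ℝ] E}
    (hΦ : ∀ z ∈ Ω, HasFDerivWithinAt Φ (Φ' z) Ω z) (hinj : Set.InjOn Φ Ω) {c : ℝ} (hc : 0 < c)
    (hdet : ∀ z ∈ Ω, c ≤ |(Φ' z).det|) {H : E → F} (hH : IntegrableOn H Ω μ) :
    ∃ G : E → F, Integrable G μ ∧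
      (∀ φ : E → ℂ, ∫ z in Ω, φ (Φ z) • H z ∂μ = ∫ w, φ w • G w ∂μ) ∧
      ∫⁻ w, ‖G w‖ₑ ^ 2 ∂μ ≤ ENNReal.ofReal c⁻¹ * ∫⁻ z in Ω, ‖H z‖ₑ ^ 2 ∂μ := by
  have hdet_pos (z) (hz : z ∈ Ω) : 0 < |(Φ' z).det| := hc.trans_le (hdet z hz)
  have hmeas : MeasurableSet (Φ '' Ω) := measurable_image_of_fderivWithin hΩ hΦ hinj
  let inv := Function.invFunOn Φ Ω
  let G : E → F := fun w ↦ |(Φ' (inv w)).det|⁻¹ • H (inv w)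
  have hG (z) (hz : z ∈ Ω) : G (Φ z) = |(Φ' z).det|⁻¹ • H z := by
    simp only [G, inv, hinj.leftInvOn_invFunOn hz]
  refine ⟨(Φ '' Ω).indicator G, ?_, fun φ ↦ ?_, ?_⟩
  · rw [integrable_indicator_iff hmeas,
      integrableOn_image_iff_integrableOn_abs_det_fderiv_smul μ hΩ hΦ hinj]
    refine hH.congr_fun (fun z hz ↦ ?_) hΩ
    simp only [hG z hz, smul_inv_smul₀ (hdet_pos z hz).ne']
  · simp_rw [← Set.indicator_smul]
    rw [integral_indicator hmeas, integral_image_eq_integral_abs_det_fderiv_smul μ hΩ hΦ hinj]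
    refine setIntegral_congr_fun hΩ fun z hz ↦ ?_
    simp only [hG z hz, smul_comm (φ (Φ z)), smul_inv_smul₀ (hdet_pos z hz).ne']
  · rw [lintegral_comp_indicator hmeas G (φ := (‖·‖ₑ ^ 2)) (by simp),
      lintegral_image_eq_lintegral_abs_det_fderiv_mul μ hΩ hΦ hinj,
      ← lintegral_const_mul' _ _ ENNReal.ofReal_ne_top]
    refine setLIntegral_mono' hΩ fun z hz ↦ ?_
    calc ENNReal.ofReal |(Φ' z).det| * ‖G (Φ z)‖ₑ ^ 2
        = ENNReal.ofReal (|(Φ' z).det| * |(Φ' z).det|⁻¹ ^ 2) * ‖H z‖ₑ ^ 2 := by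
          rw [hG z hz, enorm_smul, Real.enorm_of_nonneg (by positivity), mul_pow, ← mul_assoc,
            ← ENNReal.ofReal_pow (by positivity), ← ENNReal.ofReal_mul (by positivity)]
      _ = ENNReal.ofReal |(Φ' z).det|⁻¹ * ‖H z‖ₑ ^ 2 := by
          rw [pow_two, mul_inv_cancel_left₀ (hdet_pos z hz).ne']
      _ ≤ ENNReal.ofReal c⁻¹ * ‖H z‖ₑ ^ 2 := by gcongr; exact hdet z hz

end ChangeOfVariables

open scoped FourierTransform

theorem det_add_prod_coprod {𝕜 V : Type*} [NontriviallyNormedField 𝕜] [CompleteSpace 𝕜]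
    [NormedAddCommGroup V] [NormedSpace 𝕜 V] [FiniteDimensional 𝕜 V] (A B : V →L[𝕜] V) :
    (((ContinuousLinearMap.id 𝕜 V).coprod (.id 𝕜 V)).prod (A.coprod B)).det = (B - A).det := by
  let b := Module.finBasis 𝕜 V
  have hblocks : LinearMap.toMatrix (b.prod b) (b.prod b)
      (((ContinuousLinearMap.id 𝕜 V).coprod (.id 𝕜 V)).prod (A.coprod B)) =
        Matrix.fromBlocks 1 1 (LinearMap.toMatrix b b A) (LinearMap.toMatrix b b B) := by
    ext (i | i) (j | j) <;>
      simp [LinearMap.toMatrix_apply, Matrix.one_apply, Finsupp.single_apply, eq_comm]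
  rw [ContinuousLinearMap.det, ← LinearMap.det_toMatrix (b.prod b), hblocks,
    Matrix.det_fromBlocks_one₁₁, Matrix.mul_one, ← map_sub, LinearMap.det_toMatrix]
  rfl

theorem enorm_circle_smul (u : Circle) (z : ℂ) : ‖u • z‖ₑ = ‖z‖ₑ :=
  enorm_eq_iff_norm_eq.2 (Circle.norm_smul u z)

section FourierExtension

variable {ι κ : Type*} [Fintype ι] [Fintype κ] {Q : (ι → ℝ) → κ → ℝ} {f g : (ι → ℝ) → ℂ}

/-- The Fourier extension operator of the graph of `Q`, with the integral over the whole parameter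
space, so that a domain is prescribed through the support of `f`. The physical variable
is split into its components dual to `ξ` and to `Q ξ`. -/
noncomputable def fourierExtension (Q : (ι → ℝ) → κ → ℝ) (f : (ι → ℝ) → ℂ)
    (z : (ι → ℝ) × (κ → ℝ)) : ℂ :=
  ∫ ξ, 𝐞 (z.1 ⬝ᵥ ξ + z.2 ⬝ᵥ Q ξ) • f ξ

theorem integrable_fourierChar_smul {α : Type*} {mα : MeasurableSpace α} {μ : Measure α}
    {φ : α → ℝ} (hφ : Measurable φ) {F : α → ℂ} (hF : Integrable F μ) :
    Integrable (fun a ↦ 𝐞 (φ a) • F a) μ :=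
  hF.bdd_smul (φ := fun a ↦ (𝐞 (φ a) : ℂ)) 1
    (by fun_prop)
    (.of_forall fun a ↦ (Circle.norm_coe _).le)

theorem measurable_phase (hQ : Measurable Q) :
    Measurable fun p : ((ι → ℝ) × (κ → ℝ)) × (ι → ℝ) ↦ p.1.1 ⬝ᵥ p.2 + p.1.2 ⬝ᵥ Q p.2 := by
  simp only [dotProduct]
  fun_prop

theorem measurable_fourierExtension (hQ : Measurable Q) (hf : Measurable f) :
    Measurable (fourierExtension Q f) := by
  have hmeas : Measurable fun p : ((ι → ℝ) × (κ → ℝ)) × (ι → ℝ) ↦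
      𝐞 (p.1.1 ⬝ᵥ p.2 + p.1.2 ⬝ᵥ Q p.2) • f p.2 :=
    (((by fun_prop : Continuous fun t ↦ (𝐞 t : ℂ)).measurable.comp
      (measurable_phase hQ)).mul (hf.comp measurable_snd) :)
  exact hmeas.stronglyMeasurable.integral_prod_right'.measurable

theorem enorm_fourierExtension_le (z : (ι → ℝ) × (κ → ℝ)) :
    ‖fourierExtension Q f z‖ₑ ≤ ∫⁻ ξ, ‖f ξ‖ₑ :=
  (enorm_integral_le_lintegral_enorm _).trans_eq <| by simp only [enorm_circle_smul]

theorem integrable_phase_smul (hQ : Measurable Q) (hf : Integrable f) (z : (ι → ℝ) × (κ → ℝ)) :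
    Integrable fun ξ ↦ 𝐞 (z.1 ⬝ᵥ ξ + z.2 ⬝ᵥ Q ξ) • f ξ :=
  integrable_fourierChar_smul ((measurable_phase hQ).comp measurable_prodMk_left) hf

theorem fourierExtension_sum {α : Type*} (hQ : Measurable Q) (s : Finset α)
    {F : α → (ι → ℝ) → ℂ} (hF : ∀ a ∈ s, Integrable (F a)) (z : (ι → ℝ) × (κ → ℝ)) :
    fourierExtension Q (∑ a ∈ s, F a) z = ∑ a ∈ s, fourierExtension Q (F a) z := by
  simp only [fourierExtension, Finset.sum_apply, Finset.smul_sum]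
  exact integral_finsetSum s fun a ha ↦ integrable_phase_smul hQ (hF a ha) z

theorem fourierExtension_add (hQ : Measurable Q) (hf : Integrable f) (hg : Integrable g)
    (z : (ι → ℝ) × (κ → ℝ)) :
    fourierExtension Q (f + g) z = fourierExtension Q f z + fourierExtension Q g z := by
  simp only [fourierExtension, Pi.add_apply, smul_add]
  exact integral_add (integrable_phase_smul hQ hf z) (integrable_phase_smul hQ hg z)

theorem lintegral_enorm_fourierExtension_slice_sq_le (hQ : Measurable Q) (hf : Integrable f)
    (y : κ → ℝ) :
    ∫⁻ x, ‖fourierExtension Q f (x, y)‖ₑ ^ 2 ≤ ∫⁻ ξ, ‖f ξ‖ₑ ^ 2 := by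
  have hphase : Measurable fun ξ ↦ y ⬝ᵥ Q ξ := by simp only [dotProduct]; fun_prop
  have h := lintegral_enorm_fourier_pi_sq_le (integrable_fourierChar_smul hphase hf)
  simpa only [fourierExtension, AddChar.map_add_eq_mul, mul_smul, enorm_circle_smul] using h

theorem lintegral_enorm_fourierExtension_mul_sq_le {Q : (ι → ℝ) → ι → ℝ}
    {Q' : (ι → ℝ) → (ι → ℝ) →L[ℝ] ι → ℝ} (hQ : ∀ ξ, HasFDerivAt Q (Q' ξ) ξ)
    {Ω : Set ((ι → ℝ) × (ι → ℝ))} (hΩ : MeasurableSet Ω)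
    (hinj : Set.InjOn (fun z : (ι → ℝ) × (ι → ℝ) ↦ (z.1 + z.2, Q z.1 + Q z.2)) Ω)
    {c : ℝ} (hc : 0 < c) (hdet : ∀ z ∈ Ω, c ≤ |(Q' z.2 - Q' z.1).det|)
    (hf : Integrable f) (hg : Integrable g)
    (hfg : ∀ z ∉ Ω, f z.1 * g z.2 = 0) :
    ∫⁻ z, ‖fourierExtension Q f z * fourierExtension Q g z‖ₑ ^ 2 ≤
      ENNReal.ofReal c⁻¹ * ((∫⁻ ξ, ‖f ξ‖ₑ ^ 2) * ∫⁻ ξ, ‖g ξ‖ₑ ^ 2) := by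
  have hderiv (z : (ι → ℝ) × (ι → ℝ)) : HasFDerivAt
      (fun z : (ι → ℝ) × (ι → ℝ) ↦ (z.1 + z.2, Q z.1 + Q z.2))
      (((ContinuousLinearMap.id ℝ (ι → ℝ)).coprod (.id ℝ (ι → ℝ))).prod
        ((Q' z.1).coprod (Q' z.2))) z := by
    convert! (hasFDerivAt_fst.add hasFDerivAt_snd).prodMk
      (((hQ z.1).comp z hasFDerivAt_fst).add ((hQ z.2).comp z hasFDerivAt_snd)) using 1
  have : (volume : Measure ((ι → ℝ) × (ι → ℝ))).IsAddHaarMeasure :=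
    Measure.prod.instIsAddHaarMeasure _ _
  obtain ⟨G, hG, hfourier, hnorm⟩ := exists_density_of_injOn (μ := volume) hΩ
    (fun z _ ↦ (hderiv z).hasFDerivWithinAt) hinj hc
    (fun z hz ↦ (hdet z hz).trans_eq (by rw [det_add_prod_coprod]))
    (hf.mul_prod hg).integrableOn
  have hmul (z : (ι → ℝ) × (ι → ℝ)) : fourierExtension Q f z * fourierExtension Q g z =
      ∫ w, 𝐞 (z.1 ⬝ᵥ w.1 + z.2 ⬝ᵥ w.2) • G w := by
    rw [fourierExtension, fourierExtension, ← integral_prod_mul]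
    refine Eq.trans ?_ (hfourier fun w ↦ (𝐞 (z.1 ⬝ᵥ w.1 + z.2 ⬝ᵥ w.2) : ℂ))
    rw [setIntegral_eq_integral_of_forall_compl_eq_zero fun w hw ↦ by rw [hfg w hw, smul_zero]]
    refine integral_congr_ae (.of_forall fun w ↦ ?_)
    simp only [dotProduct_add, Circle.smul_def, AddChar.map_add_eq_mul, Circle.coe_mul,
      smul_eq_mul]
    ring
  simp_rw [hmul]
  refine (lintegral_enorm_fourier_prod_sq_le hG).trans (hnorm.trans ?_)
  gcongr
  calc ∫⁻ z in Ω, ‖f z.1 * g z.2‖ₑ ^ 2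
      ≤ ∫⁻ z : (ι → ℝ) × (ι → ℝ), ‖f z.1‖ₑ ^ 2 * ‖g z.2‖ₑ ^ 2 := by
        simp_rw [enorm_mul, mul_pow]
        exact setLIntegral_le_lintegral _ _
    _ = (∫⁻ ξ, ‖f ξ‖ₑ ^ 2) * ∫⁻ ξ, ‖g ξ‖ₑ ^ 2 :=
        lintegral_prod_mul (hf.1.enorm.pow_const 2) (hg.1.enorm.pow_const 2)

end FourierExtension

section MonomialMap

variable {ι : Type*} {lam : ι → ι}

/-- The quadratic map with components `ξ (lam j) * ξ j`. -/
def monomialMap (lam : ι → ι) (ξ : ι → ℝ) : ι → ℝ :=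
  fun j ↦ ξ (lam j) * ξ j

theorem measurable_monomialMap : Measurable (monomialMap lam) := by
  unfold monomialMap
  fun_prop

/-- The Jacobian matrix of `monomialMap lam`, which is also twice the matrix of its polarization
with one argument fixed. -/
def monomialJacobian [DecidableEq ι] (lam : ι → ι) (ξ : ι → ℝ) : Matrix ι ι ℝ :=
  .of fun j ↦ Pi.single j (ξ (lam j)) + Pi.single (lam j) (ξ j)

theorem monomialJacobian_sub [DecidableEq ι] (ξ η : ι → ℝ) :
    monomialJacobian lam (ξ - η) = monomialJacobian lam ξ - monomialJacobian lam η := by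
  ext j k
  simp only [monomialJacobian, Pi.sub_apply, Pi.single_sub, Matrix.of_apply, Matrix.sub_apply,
    Pi.add_apply]
  ring

theorem monomialJacobian_mulVec [Fintype ι] [DecidableEq ι] (t η : ι → ℝ) :
    monomialJacobian lam t *ᵥ η = fun j ↦ t (lam j) * η j + t j * η (lam j) := by
  ext j
  simp only [Matrix.mulVec, monomialJacobian, Matrix.of_apply, add_dotProduct, single_dotProduct]

theorem monomialMap_add [Fintype ι] [DecidableEq ι] (η t : ι → ℝ) :
    monomialMap lam (η + t) =
      monomialMap lam η + monomialJacobian lam t *ᵥ η + monomialMap lam t := by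
  ext j
  simp only [monomialJacobian_mulVec, monomialMap, Pi.add_apply]
  ring

theorem hasFDerivAt_monomialMap [Fintype ι] [DecidableEq ι] (ξ : ι → ℝ) :
    HasFDerivAt (monomialMap lam)
      (Matrix.toLin' (monomialJacobian lam ξ)).toContinuousLinearMap ξ := by
  refine hasFDerivAt_pi'.2 fun j ↦ ((hasFDerivAt_apply (lam j) ξ).mul
    (hasFDerivAt_apply j ξ)).congr_fderiv ?_
  ext η
  simp [monomialJacobian_mulVec]

theorem pow_card_le_abs_det_monomialJacobian [Fintype ι] [LinearOrder ι] (hlam : ∀ j, lam j ≤ j)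
    {ζ : ι → ℝ} {δ : ℝ} (hδ : 0 ≤ δ) (hζ : ∀ j, δ ≤ |ζ j|) :
    δ ^ Fintype.card ι ≤ |(monomialJacobian lam ζ).det| := by
  have hlower : (monomialJacobian lam ζ).IsLowerTriangular := fun i j hij ↦ by
    have hij : i < j := hij
    simp [monomialJacobian, hij.ne', ((hlam i).trans_lt hij).ne']
  rw [Matrix.det_of_isLowerTriangular _ hlower, Finset.abs_prod, Fintype.card, ← Finset.prod_const]
  refine Finset.prod_le_prod (fun _ _ ↦ hδ) fun j _ ↦ ?_
  rcases eq_or_ne (lam j) j with hj | hj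
  · have hdiag : monomialJacobian lam ζ j j = 2 * ζ j := by simp [monomialJacobian, hj, two_mul]
    rw [hdiag, abs_mul, abs_two]
    linarith [hζ j, abs_nonneg (ζ j)]
  · simpa [monomialJacobian, hj.symm] using hζ (lam j)

theorem mul_sub_eq_of_add_eq {a b c d a' b' c' d' : ℝ} (hac : a + c = a' + c')
    (hbd : b + d = b' + d') (h : a * b + c * d = a' * b' + c' * d') :
    (a - c) * (b - d) = (a' - c') * (b' - d') := by
  linear_combination 2 * h - (b + d) * hac - (a' + c') * hbd

theorem injOn_add_monomialMap_add [PartialOrder ι] [WellFoundedLT ι] (hlam : ∀ j, lam j ≤ j)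
    (σ : ι → ℝ) :
    Set.InjOn (fun z : (ι → ℝ) × (ι → ℝ) ↦ (z.1 + z.2, monomialMap lam z.1 + monomialMap lam z.2))
      {z | ∀ j, 0 < σ j * (z.1 j - z.2 j)} := by
  rintro ⟨ξ, η⟩ hz ⟨ξ', η'⟩ hz' h
  rw [Prod.mk.injEq, funext_iff, funext_iff] at h
  obtain ⟨hadd, hmono⟩ := h
  change ∀ j, _ at hz hz'
  have hdiff (j) : ξ j - η j = ξ' j - η' j := by
    induction j using WellFoundedLT.induction with
    | _ j ih =>
      have hmul : (ξ (lam j) - η (lam j)) * (ξ j - η j) =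
          (ξ' (lam j) - η' (lam j)) * (ξ' j - η' j) :=
        mul_sub_eq_of_add_eq (hadd (lam j)) (hadd j) (hmono j)
      rcases (hlam j).eq_or_lt with hj | hj
      · rw [hj, mul_self_eq_mul_self_iff] at hmul
        refine hmul.resolve_right fun hneg ↦ ?_
        have := hz j
        rw [hneg, mul_neg] at this
        linarith [hz' j]
      · rw [ih _ hj] at hmul
        exact mul_left_cancel₀ (right_ne_zero_of_mul (hz' (lam j)).ne') hmul
  have hsum (j) : ξ j + η j = ξ' j + η' j := hadd j
  ext j
  · linarith [hsum j, hdiff j]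
  · linarith [hsum j, hdiff j]

theorem lintegral_enorm_fourierExtension_monomialMap_mul_sq_le [Fintype ι] [LinearOrder ι]
    (hlam : ∀ j, lam j ≤ j) {σ : ι → ℝ} (hσ : ∀ j, |σ j| ≤ 1) {δ : ℝ} (hδ : 0 < δ)
    {f g : (ι → ℝ) → ℂ} (hf : Integrable f) (hg : Integrable g)
    (hfg : ∀ ξ η, f ξ ≠ 0 → g η ≠ 0 → ∀ j, δ ≤ σ j * (ξ j - η j)) :
    ∫⁻ z, ‖fourierExtension (monomialMap lam) f z * fourierExtension (monomialMap lam) g z‖ₑ ^ 2 ≤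
      ENNReal.ofReal (δ ^ Fintype.card ι)⁻¹ * ((∫⁻ ξ, ‖f ξ‖ₑ ^ 2) * ∫⁻ ξ, ‖g ξ‖ₑ ^ 2) := by
  let Ω : Set ((ι → ℝ) × (ι → ℝ)) := {z | ∀ j, δ ≤ σ j * (z.1 j - z.2 j)}
  have hΩ : MeasurableSet Ω := by
    have hΩ' : Ω = ⋂ j, {z | δ ≤ σ j * (z.1 j - z.2 j)} := Set.ofPred_forall _
    exact hΩ' ▸ .iInter fun j ↦ measurableSet_le (by fun_prop) (by fun_prop)
  refine lintegral_enorm_fourierExtension_mul_sq_le hasFDerivAt_monomialMap hΩ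
    ((injOn_add_monomialMap_add hlam σ).mono fun z hz j ↦ hδ.trans_le (hz j)) (by positivity)
    (fun z hz ↦ ?_) hf hg fun z hz ↦ ?_
  · rw [← map_sub, ← map_sub, ← monomialJacobian_sub, LinearMap.det_toContinuousLinearMap,
      LinearMap.det_toLin']
    refine pow_card_le_abs_det_monomialJacobian hlam hδ.le fun j ↦ ?_
    calc δ ≤ |σ j * (z.1 j - z.2 j)| := (hz j).trans (le_abs_self _)
      _ ≤ |z.2 j - z.1 j| := by
        rw [abs_mul, abs_sub_comm]
        exact mul_le_of_le_one_left (abs_nonneg _) (hσ j)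
  · rw [mul_eq_zero]
    by_contra! h
    exact hz (hfg _ _ h.1 h.2)

end MonomialMap

section LIntegralInequalities

variable {α E : Type*} {mα : MeasurableSpace α} {μ : Measure α} [NormedAddCommGroup E]

theorem lintegral_rpow_add_le {F : α → ℝ≥0∞} (hF : AEMeasurable F μ) {M : ℝ≥0∞}
    (hM : ∀ x, F x ≤ M) {a b : ℝ} (ha : 0 ≤ a) (hb : 0 ≤ b) :
    ∫⁻ x, F x ^ (a + b) ∂μ ≤ M ^ a * ∫⁻ x, F x ^ b ∂μ := by
  rw [← lintegral_const_mul'' _ (hF.pow_const b)]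
  refine lintegral_mono fun x ↦ ?_
  rw [ENNReal.rpow_add_of_nonneg _ _ ha hb]
  gcongr
  exact hM x

theorem lintegral_enorm_rpow_le_of_support_subset {f : α → E} (hf : AEStronglyMeasurable f μ)
    {S : Set α} (hS : μ S ≤ 1) (hfS : Function.support f ⊆ S) {t s : ℝ} (ht : 0 < t)
    (hts : t ≤ s) :
    ∫⁻ x, ‖f x‖ₑ ^ t ∂μ ≤ (∫⁻ x, ‖f x‖ₑ ^ s ∂μ) ^ (t / s) := by
  have hs : 0 < s := ht.trans_le hts
  have hset {r : ℝ} (hr : 0 < r) : ∫⁻ x in S, ‖f x‖ₑ ^ r ∂μ = ∫⁻ x, ‖f x‖ₑ ^ r ∂μ :=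
    setLIntegral_eq_of_support_subset fun x hx ↦ hfS fun h ↦ hx (by simp [h, hr])
  have hnorm := eLpNorm'_le_eLpNorm'_mul_rpow_measure_univ ht hts hf.restrict (μ := μ.restrict S)
  rw [Measure.restrict_apply_univ, eLpNorm', eLpNorm', hset ht, hset hs] at hnorm
  have hS' : μ S ^ (1 / t - 1 / s) ≤ 1 :=
    ENNReal.rpow_le_one hS (sub_nonneg.2 (one_div_le_one_div_of_le ht hts))
  have := ENNReal.rpow_le_rpow (hnorm.trans (mul_le_of_le_one_right' hS')) ht.le
  rwa [← ENNReal.rpow_mul, ← ENNReal.rpow_mul, one_div_mul_cancel ht.ne', ENNReal.rpow_one,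
    one_div_mul_eq_div] at this

theorem lintegral_enorm_rpow_mul_lintegral_sq_le {f : α → E} (hf : AEStronglyMeasurable f μ)
    {S : Set α} (hS : μ S ≤ 1) (hfS : Function.support f ⊆ S) {a s : ℝ} (ha : 0 ≤ a)
    (hs : 2 ≤ s) :
    (∫⁻ x, ‖f x‖ₑ ∂μ) ^ a * ∫⁻ x, ‖f x‖ₑ ^ 2 ∂μ ≤ (∫⁻ x, ‖f x‖ₑ ^ s ∂μ) ^ ((a + 2) / s) := by
  have hone := lintegral_enorm_rpow_le_of_support_subset hf hS hfS one_pos (by linarith : 1 ≤ s)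
  have htwo := lintegral_enorm_rpow_le_of_support_subset hf hS hfS two_pos hs
  simp only [ENNReal.rpow_one, ENNReal.rpow_two] at hone htwo
  refine (mul_le_mul' (ENNReal.rpow_le_rpow hone ha) htwo).trans_eq ?_
  rw [← ENNReal.rpow_mul, ← ENNReal.rpow_add_of_nonneg _ _ (by positivity) (by positivity)]
  ring_nf

theorem setLIntegral_univ_prod {α β : Type*} [MeasureSpace α] [MeasureSpace β]
    [SFinite (volume : Measure α)] [SFinite (volume : Measure β)] {t : Set β} {φ : α × β → ℝ≥0∞}
    (hφ : Measurable φ) :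
    ∫⁻ z in Set.univ ×ˢ t, φ z = ∫⁻ y in t, ∫⁻ x, φ (x, y) := by
  rw [Measure.volume_eq_prod, ← Measure.prod_restrict, Measure.restrict_univ,
    lintegral_prod_symm' _ hφ]

end LIntegralInequalities

section UnitCube

/-- The half-open unit cube, which tiles the space by translations. -/
def unitCube (ι : Type*) : Set (ι → ℝ) :=
  Set.univ.pi fun _ ↦ Set.Ico 0 1

theorem measurableSet_unitCube {ι : Type*} [Countable ι] : MeasurableSet (unitCube ι) :=
  .univ_pi fun _ ↦ measurableSet_Ico

variable {ι κ : Type*} [Fintype ι] [Fintype κ] {Q : (ι → ℝ) → κ → ℝ} {f g : (ι → ℝ) → ℂ}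
  {s R : ℝ}

theorem volume_unitCube : volume (unitCube ι) = 1 := by
  simp [unitCube, Real.volume_pi_Ico]

/-- The extension inequality of exponent `s` with constant `A`, for functions supported in the unit
cube and with the variable dual to `Q ξ` truncated to the sup-norm ball of radius `R`. -/
def IsExtensionBound (Q : (ι → ℝ) → κ → ℝ) (s R : ℝ) (A : ℝ≥0∞) : Prop :=
  ∀ f : (ι → ℝ) → ℂ, Measurable f → Integrable f → Function.support f ⊆ unitCube ι →
    ∫⁻ z in Set.univ ×ˢ Metric.closedBall 0 R, ‖fourierExtension Q f z‖ₑ ^ s ≤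
      A * ∫⁻ ξ, ‖f ξ‖ₑ ^ s

theorem isExtensionBound_volume_closedBall (hQ : Measurable Q) (hs : 2 ≤ s) :
    IsExtensionBound Q s R (volume (Metric.closedBall (0 : κ → ℝ) R)) := by
  intro f hf hfi hfS
  have hE : Measurable fun z ↦ ‖fourierExtension Q f z‖ₑ :=
    (measurable_fourierExtension hQ hf).enorm
  calc ∫⁻ z in Set.univ ×ˢ Metric.closedBall 0 R, ‖fourierExtension Q f z‖ₑ ^ s
      ≤ (∫⁻ ξ, ‖f ξ‖ₑ) ^ (s - 2) *
          ∫⁻ z in Set.univ ×ˢ Metric.closedBall 0 R, ‖fourierExtension Q f z‖ₑ ^ 2 := by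
        simpa only [sub_add_cancel, ENNReal.rpow_two] using lintegral_rpow_add_le hE.aemeasurable
          enorm_fourierExtension_le (sub_nonneg.2 hs) zero_le_two
    _ ≤ (∫⁻ ξ, ‖f ξ‖ₑ) ^ (s - 2) *
          (volume (Metric.closedBall (0 : κ → ℝ) R) * ∫⁻ ξ, ‖f ξ‖ₑ ^ 2) := by
        gcongr
        rw [setLIntegral_univ_prod (hE.pow_const 2), mul_comm, ← setLIntegral_const]
        exact lintegral_mono fun y ↦ lintegral_enorm_fourierExtension_slice_sq_le hQ hfi y
    _ = volume (Metric.closedBall (0 : κ → ℝ) R) *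
          ((∫⁻ ξ, ‖f ξ‖ₑ) ^ (s - 2) * ∫⁻ ξ, ‖f ξ‖ₑ ^ 2) := mul_left_comm _ _ _
    _ ≤ volume (Metric.closedBall (0 : κ → ℝ) R) * ∫⁻ ξ, ‖f ξ‖ₑ ^ s := by
        gcongr
        refine (lintegral_enorm_rpow_mul_lintegral_sq_le hf.aestronglyMeasurable
          volume_unitCube.le hfS (sub_nonneg.2 hs) hs).trans_eq ?_
        rw [sub_add_cancel, div_self (by positivity), ENNReal.rpow_one]

theorem lintegral_enorm_fourierExtension_mul_rpow_le [LinearOrder ι] {lam : ι → ι}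
    (hlam : ∀ j, lam j ≤ j) {σ : ι → ℝ} (hσ : ∀ j, |σ j| ≤ 1) {δ : ℝ} (hδ : 0 < δ) (hs : 4 ≤ s)
    (hf : Measurable f) (hg : Measurable g) (hfi : Integrable f) (hgi : Integrable g)
    (hfS : Function.support f ⊆ unitCube ι) (hgS : Function.support g ⊆ unitCube ι)
    (hfg : ∀ ξ η, f ξ ≠ 0 → g η ≠ 0 → ∀ j, δ ≤ σ j * (ξ j - η j)) :
    ∫⁻ z, (‖fourierExtension (monomialMap lam) f z‖ₑ *
        ‖fourierExtension (monomialMap lam) g z‖ₑ) ^ (s / 2) ≤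
      ENNReal.ofReal (δ ^ Fintype.card ι)⁻¹ *
        ((∫⁻ ξ, ‖f ξ‖ₑ ^ s) ^ (1 / 2 : ℝ) * (∫⁻ ξ, ‖g ξ‖ₑ ^ s) ^ (1 / 2 : ℝ)) := by
  have ha : 0 ≤ s / 2 - 2 := by linarith
  have hexp : (s / 2 - 2 + 2) / s = 1 / 2 := by field_simp; ring
  have hQ : Measurable (monomialMap lam) := measurable_monomialMap
  have hsup := lintegral_rpow_add_le (μ := volume)
    ((measurable_fourierExtension hQ hf).enorm.mul
      (measurable_fourierExtension hQ hg).enorm).aemeasurable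
    (fun z ↦ mul_le_mul' (enorm_fourierExtension_le z) (enorm_fourierExtension_le z)) ha zero_le_two
  have hL2 := lintegral_enorm_fourierExtension_monomialMap_mul_sq_le hlam hσ hδ hfi hgi hfg
  have hf2 := lintegral_enorm_rpow_mul_lintegral_sq_le hf.aestronglyMeasurable
    volume_unitCube.le hfS ha (by linarith : 2 ≤ s)
  have hg2 := lintegral_enorm_rpow_mul_lintegral_sq_le hg.aestronglyMeasurable
    volume_unitCube.le hgS ha (by linarith : 2 ≤ s)
  rw [hexp] at hf2 hg2
  simp only [Pi.mul_apply, sub_add_cancel, ENNReal.rpow_two] at hsup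
  simp only [enorm_mul] at hL2
  calc _ ≤ _ := hsup
    _ ≤ ((∫⁻ ξ, ‖f ξ‖ₑ) * ∫⁻ ξ, ‖g ξ‖ₑ) ^ (s / 2 - 2) * (ENNReal.ofReal (δ ^ Fintype.card ι)⁻¹ *
          ((∫⁻ ξ, ‖f ξ‖ₑ ^ 2) * ∫⁻ ξ, ‖g ξ‖ₑ ^ 2)) := by gcongr
    _ = ENNReal.ofReal (δ ^ Fintype.card ι)⁻¹ *
          (((∫⁻ ξ, ‖f ξ‖ₑ) ^ (s / 2 - 2) * ∫⁻ ξ, ‖f ξ‖ₑ ^ 2) *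
            ((∫⁻ ξ, ‖g ξ‖ₑ) ^ (s / 2 - 2) * ∫⁻ ξ, ‖g ξ‖ₑ ^ 2)) := by
        rw [ENNReal.mul_rpow_of_nonneg _ _ ha]
        ring
    _ ≤ _ := by gcongr

end UnitCube

theorem exists_le_three_mul_of_half_add {S : Set ℝ≥0∞} {A₀ B : ℝ≥0∞} (hA₀ : A₀ ≠ ⊤) (hB : B ≠ 0)
    (hmem : A₀ ∈ S) (hstep : ∀ A ∈ S, 2⁻¹ * A + B ∈ S) : ∃ A ∈ S, A ≤ 3 * B := by
  have hiter (k : ℕ) : ∃ A ∈ S, A ≤ 2⁻¹ ^ k * A₀ + 2 * B := by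
    induction k with
    | zero => exact ⟨A₀, hmem, by simp⟩
    | succ k ih =>
      obtain ⟨A, hA, hle⟩ := ih
      refine ⟨_, hstep A hA, ?_⟩
      calc 2⁻¹ * A + B ≤ 2⁻¹ * (2⁻¹ ^ k * A₀ + 2 * B) + B := by gcongr
        _ = 2⁻¹ ^ (k + 1) * A₀ + 2 * B := by
          rw [mul_add, ENNReal.inv_mul_cancel_left' (by simp) (by simp)]
          ring
  have hlim : Filter.Tendsto (fun k : ℕ ↦ (2⁻¹ : ℝ≥0∞) ^ k * A₀) Filter.atTop (nhds 0) := by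
    simpa using ENNReal.Tendsto.mul_const
      (ENNReal.tendsto_pow_atTop_nhds_zero_of_lt_one ENNReal.one_half_lt_one) (.inr hA₀)
  obtain ⟨k, hk⟩ := (hlim.eventually_lt_const hB.bot_lt).exists
  obtain ⟨A, hA, hle⟩ := hiter k
  refine ⟨A, hA, hle.trans ?_⟩
  calc 2⁻¹ ^ k * A₀ + 2 * B ≤ B + 2 * B := by gcongr
    _ = 3 * B := by ring

section AffineRescaling

variable {ι : Type*} {d t : ι → ℝ}

theorem measurableEmbedding_mul_add [Countable ι] (hd : ∀ i, 0 < d i) :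
    MeasurableEmbedding fun ξ : ι → ℝ ↦ d * ξ + t :=
  (MeasurableEquiv.piCongrRight fun i ↦ (MeasurableEquiv.mulLeft₀ (d i) (hd i).ne').trans
    (MeasurableEquiv.addRight (t i))).measurableEmbedding

variable [Fintype ι]

theorem map_mul_add_volume (hd : ∀ i, 0 < d i) :
    (volume : Measure (ι → ℝ)).map (fun ξ ↦ d * ξ + t) =
      ENNReal.ofReal (∏ i, d i)⁻¹ • volume := by
  classical
  have hpos : 0 < ∏ i, d i := Finset.prod_pos fun i _ ↦ hd i
  have hmul : (volume : Measure (ι → ℝ)).map (d * ·) = ENNReal.ofReal (∏ i, d i)⁻¹ • volume := by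
    have h := Real.map_matrix_volume_pi_eq_smul_volume_pi (M := Matrix.diagonal d)
      (by rw [Matrix.det_diagonal]; exact hpos.ne')
    rw [Matrix.det_diagonal, abs_of_pos (inv_pos.2 hpos)] at h
    rw [← h]
    congr 1
    ext ξ i
    simp [Matrix.mulVec_diagonal]
  have hcomp : (fun ξ ↦ d * ξ + t) = (· + t) ∘ (d * ·) := rfl
  rw [hcomp, ← Measure.map_map (by fun_prop) (by fun_prop), hmul, Measure.map_smul,
    map_add_right_eq_self]

theorem lintegral_comp_mul_add (hd : ∀ i, 0 < d i) (φ : (ι → ℝ) → ℝ≥0∞) :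
    ∫⁻ ξ, φ (d * ξ + t) = ENNReal.ofReal (∏ i, d i)⁻¹ * ∫⁻ ξ, φ ξ := by
  rw [← smul_eq_mul, ← lintegral_smul_measure, ← map_mul_add_volume (t := t) hd,
    (measurableEmbedding_mul_add hd).lintegral_map]

variable {lam : ι → ι} {f : (ι → ℝ) → ℂ}

theorem dotProduct_add_dotProduct_monomialMap_mul_add [DecidableEq ι] (x y ξ : ι → ℝ) :
    x ⬝ᵥ (d * ξ + t) + y ⬝ᵥ monomialMap lam (d * ξ + t) =
      (d * (x + y ᵥ* monomialJacobian lam t)) ⬝ᵥ ξ +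
        ((d ∘ lam) * d * y) ⬝ᵥ monomialMap lam ξ + (x ⬝ᵥ t + y ⬝ᵥ monomialMap lam t) := by
  have hmul (u v : ι → ℝ) : u ⬝ᵥ (d * v) = (d * u) ⬝ᵥ v := by
    simp only [dotProduct, Pi.mul_apply, mul_left_comm, mul_assoc]
  have hquad : y ⬝ᵥ monomialMap lam (d * ξ) = ((d ∘ lam) * d * y) ⬝ᵥ monomialMap lam ξ := by
    simp only [dotProduct, Pi.mul_apply, monomialMap, Function.comp_apply]
    exact Finset.sum_congr rfl fun i _ ↦ by ring
  rw [monomialMap_add, dotProduct_add, dotProduct_add, dotProduct_add, hquad,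
    Matrix.dotProduct_mulVec, hmul, hmul, mul_add, add_dotProduct]
  ring

theorem enorm_fourierExtension_monomialMap_eq [DecidableEq ι] (hd : ∀ i, 0 < d i) (t x y : ι → ℝ) :
    ‖fourierExtension (monomialMap lam) f (x, y)‖ₑ = ENNReal.ofReal (∏ i, d i) *
      ‖fourierExtension (monomialMap lam) (fun ξ ↦ f (d * ξ + t))
        (d * (x + y ᵥ* monomialJacobian lam t), (d ∘ lam) * d * y)‖ₑ := by
  have hpos : 0 < ∏ i, d i := Finset.prod_pos fun i _ ↦ hd i
  have hvolume : volume = ENNReal.ofReal (∏ i, d i) •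
      (volume : Measure (ι → ℝ)).map (fun ξ ↦ d * ξ + t) := by
    rw [map_mul_add_volume hd, smul_smul, ← ENNReal.ofReal_mul hpos.le, mul_inv_cancel₀ hpos.ne',
      ENNReal.ofReal_one, one_smul]
  rw [fourierExtension, hvolume, integral_smul_measure,
    (measurableEmbedding_mul_add hd).integral_map, enorm_smul, Real.enorm_eq_ofReal_abs,
    ENNReal.toReal_ofReal hpos.le, abs_of_pos hpos]
  simp only [dotProduct_add_dotProduct_monomialMap_mul_add,
    AddChar.map_add_eq_mul _ _ (x ⬝ᵥ t + y ⬝ᵥ _), mul_comm _ (𝐞 (x ⬝ᵥ t + y ⬝ᵥ _)), mul_smul]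
  simp only [Circle.smul_def (𝐞 (x ⬝ᵥ t + y ⬝ᵥ _)), integral_smul]
  simp only [← Circle.smul_def, enorm_circle_smul]
  rfl

theorem setLIntegral_comp_mul_le (hd : ∀ i, 0 < d i) (hd1 : ∀ i, d i ≤ 1) (R : ℝ)
    (φ : (ι → ℝ) → ℝ≥0∞) :
    ∫⁻ y in Metric.closedBall 0 R, φ (d * y) ≤
      ENNReal.ofReal (∏ i, d i)⁻¹ * ∫⁻ y in Metric.closedBall 0 R, φ y := by
  have hB : MeasurableSet (Metric.closedBall (0 : ι → ℝ) R) := measurableSet_closedBall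
  rw [← lintegral_indicator hB, ← lintegral_indicator hB, ← lintegral_comp_mul_add (t := 0) hd]
  refine lintegral_mono (Set.indicator_le fun y hy ↦ ?_)
  have hdy : d * y + 0 ∈ Metric.closedBall 0 R := by
    simp only [add_zero, mem_closedBall_zero_iff] at hy ⊢
    have hR : 0 ≤ R := (norm_nonneg y).trans hy
    refine (pi_norm_le_iff_of_nonneg hR).2 fun i ↦ ?_
    rw [Pi.mul_apply, norm_mul, Real.norm_of_nonneg (hd i).le]
    exact (mul_le_of_le_one_left (norm_nonneg _) (hd1 i)).trans ((norm_le_pi_norm y i).trans hy)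
  rw [Set.indicator_of_mem hdy, add_zero]

theorem setLIntegral_enorm_fourierExtension_monomialMap_rescale_le {s R : ℝ} (hs : 0 ≤ s)
    (hd : ∀ i, 0 < d i) (hd1 : ∀ i, d i ≤ 1) (hf : Measurable f) (t : ι → ℝ) :
    ∫⁻ z in Set.univ ×ˢ Metric.closedBall 0 R, ‖fourierExtension (monomialMap lam) f z‖ₑ ^ s ≤
      ENNReal.ofReal ((∏ i, d i) ^ (s - 2) * (∏ i, d (lam i))⁻¹) *
        ∫⁻ z in Set.univ ×ˢ Metric.closedBall 0 R,
          ‖fourierExtension (monomialMap lam) (fun ξ ↦ f (d * ξ + t)) z‖ₑ ^ s := by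
  classical
  let g : (ι → ℝ) → ℂ := fun ξ ↦ f (d * ξ + t)
  have hg : Measurable g := hf.comp (measurableEmbedding_mul_add hd).measurable
  have hpow {h : (ι → ℝ) → ℂ} (hh : Measurable h) :
      Measurable fun z ↦ ‖fourierExtension (monomialMap lam) h z‖ₑ ^ s :=
    (measurable_fourierExtension measurable_monomialMap hh).enorm.pow_const s
  have hpos : 0 < ∏ i, d i := Finset.prod_pos fun i _ ↦ hd i
  have hpos' : 0 < ∏ i, d (lam i) := Finset.prod_pos fun i _ ↦ hd _
  have hslice (y : ι → ℝ) : ∫⁻ x, ‖fourierExtension (monomialMap lam) f (x, y)‖ₑ ^ s =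
      ENNReal.ofReal ((∏ i, d i) ^ s * (∏ i, d i)⁻¹) *
        ∫⁻ x, ‖fourierExtension (monomialMap lam) g (x, (d ∘ lam) * d * y)‖ₑ ^ s := by
    simp_rw [enorm_fourierExtension_monomialMap_eq (f := f) hd t,
      ENNReal.mul_rpow_of_nonneg _ _ hs, mul_add d]
    rw [lintegral_const_mul' _ _ (ENNReal.rpow_ne_top_of_nonneg hs ENNReal.ofReal_ne_top),
      lintegral_comp_mul_add hd fun x ↦
        ‖fourierExtension (monomialMap lam) g (x, (d ∘ lam) * d * y)‖ₑ ^ s,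
      ← mul_assoc, ENNReal.ofReal_rpow_of_pos hpos, ← ENNReal.ofReal_mul (by positivity)]
  have hdd (i) : 0 < ((d ∘ lam) * d) i := mul_pos (hd _) (hd i)
  have hdd1 (i) : ((d ∘ lam) * d) i ≤ 1 := mul_le_one₀ (hd1 _) (hd i).le (hd1 i)
  rw [setLIntegral_univ_prod (hpow hf), setLIntegral_univ_prod (hpow hg)]
  simp_rw [hslice]
  rw [lintegral_const_mul' _ _ ENNReal.ofReal_ne_top]
  refine (mul_le_mul_right (setLIntegral_comp_mul_le hdd hdd1 R fun y ↦
    ∫⁻ x, ‖fourierExtension (monomialMap lam) g (x, y)‖ₑ ^ s) _).trans_eq ?_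
  rw [← mul_assoc, ← ENNReal.ofReal_mul (by positivity)]
  congr 2
  simp only [Pi.mul_apply, Function.comp_apply, Finset.prod_mul_distrib, mul_inv]
  rw [Real.rpow_sub hpos, Real.rpow_two]
  field_simp

/-- Rescaling `ξ j` by `δ` gains `δ ^ (s - 3)` and loses `δ⁻¹` for each `i` with `lam i = j`. -/
theorem IsExtensionBound.of_slab {s R : ℝ} {A : ℝ≥0∞}
    (hA : IsExtensionBound (monomialMap lam) s R A) (hs : 0 ≤ s) [DecidableEq ι] {W : ℕ} {j : ι}
    (hW : Finset.card {i | lam i = j} ≤ W) {δ : ℝ} (hδ : 0 < δ) (hδ1 : δ ≤ 1) {b : ℝ}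
    (hf : Measurable f) (hfi : Integrable f) (hfS : Function.support f ⊆ unitCube ι)
    (hslab : ∀ ξ, f ξ ≠ 0 → ξ j ∈ Set.Ico b (b + δ)) :
    ∫⁻ z in Set.univ ×ˢ Metric.closedBall 0 R, ‖fourierExtension (monomialMap lam) f z‖ₑ ^ s ≤
      ENNReal.ofReal (δ ^ (s - 3 - W)) * A * ∫⁻ ξ, ‖f ξ‖ₑ ^ s := by
  let d : ι → ℝ := Pi.mulSingle j δ
  let t : ι → ℝ := Pi.single j b
  have hd (i) : 0 < d i := by
    obtain rfl | hi := eq_or_ne i j <;> simp [d, *]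
  have hd1 (i) : d i ≤ 1 := by
    obtain rfl | hi := eq_or_ne i j <;> simp [d, *]
  have hprod : ∏ i, d i = δ := Fintype.prod_pi_mulSingle' j δ
  have hprod_lam : ∏ i, d (lam i) = δ ^ Finset.card {i | lam i = j} := by
    simp [d, Pi.mulSingle_apply, Finset.prod_ite]
  have hgS : Function.support (fun ξ ↦ f (d * ξ + t)) ⊆ unitCube ι := by
    intro ξ hξ i _
    obtain rfl | hi := eq_or_ne i j
    · have : b ≤ δ * ξ i + b ∧ δ * ξ i + b < b + δ := by simpa [d, t] using hslab _ hξ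
      constructor <;> nlinarith
    · simpa [d, t, hi] using hfS hξ i (Set.mem_univ i)
  have hemb := measurableEmbedding_mul_add (t := t) hd
  have hgi : Integrable fun ξ ↦ f (d * ξ + t) := by
    rw [← Function.comp_def f, ← hemb.integrable_map_iff, map_mul_add_volume hd]
    exact hfi.smul_measure ENNReal.ofReal_ne_top
  calc _ ≤ _ := setLIntegral_enorm_fourierExtension_monomialMap_rescale_le hs hd hd1 hf t
    _ ≤ ENNReal.ofReal (δ ^ (s - 2) * (δ ^ Finset.card {i | lam i = j})⁻¹) *
          (A * (ENNReal.ofReal δ⁻¹ * ∫⁻ ξ, ‖f ξ‖ₑ ^ s)) := by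
        rw [hprod, hprod_lam]
        gcongr
        refine (hA _ (by fun_prop) hgi hgS).trans_eq ?_
        rw [lintegral_comp_mul_add hd fun ξ ↦ ‖f ξ‖ₑ ^ s, hprod]
    _ = ENNReal.ofReal (δ ^ (s - 3 - Finset.card {i | lam i = j})) * A * ∫⁻ ξ, ‖f ξ‖ₑ ^ s := by
        rw [mul_left_comm A, ← mul_assoc, ← ENNReal.ofReal_mul (by positivity), mul_assoc _ A]
        congr 2
        rw [← Real.rpow_natCast, ← Real.rpow_neg hδ.le, ← Real.rpow_neg_one δ, ← Real.rpow_add hδ,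
          ← Real.rpow_add hδ]
        ring_nf
    _ ≤ _ := by
        gcongr ENNReal.ofReal ?_ * A * _
        exact Real.rpow_le_rpow_of_exponent_ge hδ hδ1 (by gcongr)

end AffineRescaling

section BroadNarrow

variable {E : Type*} [NormedAddCommGroup E] {s : ℝ}

theorem enorm_sum_filter_mem_rpow_le {α γ : Type*} [Fintype α] [Fintype γ] [DecidableEq γ]
    (hs : 1 ≤ s) (π : α → γ) (T : Finset γ) (a : α → E) :
    ‖∑ c with π c ∈ T, a c‖ₑ ^ s ≤
      (T.card : ℝ≥0∞) ^ (s - 1) * ∑ b, ‖∑ c with π c = b, a c‖ₑ ^ s := by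
  have hfiber : ∑ c with π c ∈ T, a c = ∑ b ∈ T, ∑ c with π c = b, a c := by
    rw [← Finset.sum_fiberwise_of_maps_to (g := π) (t := T) fun c hc ↦ (Finset.mem_filter.1 hc).2]
    refine Finset.sum_congr rfl fun b hb ↦ ?_
    rw [Finset.filter_filter]
    congr! 2 with c
    exact and_iff_right_of_imp (· ▸ hb)
  calc ‖∑ c with π c ∈ T, a c‖ₑ ^ s ≤ (∑ b ∈ T, ‖∑ c with π c = b, a c‖ₑ) ^ s := by
        rw [hfiber]
        exact ENNReal.rpow_le_rpow (enorm_sum_le _ _) (by linarith)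
    _ ≤ (T.card : ℝ≥0∞) ^ (s - 1) * ∑ b ∈ T, ‖∑ c with π c = b, a c‖ₑ ^ s :=
        ENNReal.rpow_sum_le_const_mul_sum_rpow _ _ hs
    _ ≤ _ := by
        gcongr
        exact Finset.subset_univ _

theorem sum_enorm_rpow_le_sum_mul_rpow {α : Type*} [Fintype α] {a : α → E} {P : α}
    (hP : ∀ c, ‖a c‖ₑ ≤ ‖a P‖ₑ) {R : α → α → Prop} [DecidableRel R] (hs : 0 ≤ s) :
    ∑ c with R c P, ‖a c‖ₑ ^ s ≤
      ∑ p : α × α with R p.1 p.2, (‖a p.1‖ₑ * ‖a p.2‖ₑ) ^ (s / 2) := by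
  classical
  calc ∑ c with R c P, ‖a c‖ₑ ^ s ≤ ∑ c with R c P, (‖a c‖ₑ * ‖a P‖ₑ) ^ (s / 2) := by
        refine Finset.sum_le_sum fun c _ ↦ ?_
        calc ‖a c‖ₑ ^ s = (‖a c‖ₑ * ‖a c‖ₑ) ^ (s / 2) := by
              rw [ENNReal.mul_rpow_of_nonneg _ _ (by positivity),
                ← ENNReal.rpow_add_of_nonneg _ _ (by positivity) (by positivity), add_halves]
          _ ≤ _ := by
              gcongr
              exact hP c
    _ = ∑ p ∈ ({c | R c P} : Finset α).map ⟨(·, P), Prod.mk_left_injective P⟩,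
          (‖a p.1‖ₑ * ‖a p.2‖ₑ) ^ (s / 2) := by simp
    _ ≤ _ := Finset.sum_le_sum_of_subset fun p ↦ by
        simp only [Finset.mem_map, Finset.mem_filter, Finset.mem_univ, true_and]
        rintro ⟨c, hc, rfl⟩
        exact hc

variable {ι β : Type*} [Fintype ι] [DecidableEq ι]

theorem enorm_sum_le_add_sum_nonempty [Fintype β] (r : β → β → Prop) [DecidableRel r] (P : ι → β)
    (a : (ι → β) → E) :
    ‖∑ c, a c‖ₑ ≤ ∑ c with ∀ j, ¬ r (c j) (P j), ‖a c‖ₑ +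
      ∑ J : Finset ι with J.Nonempty, ‖∑ c with ∀ j ∈ J, r (c j) (P j), a c‖ₑ := by
  classical
  have h := Finset.inclusion_exclusion_sum_inf_compl Finset.univ
    (fun j ↦ ({c : ι → β | r (c j) (P j)} : Finset _)) a
  have hinf (J : Finset ι) : J.inf (fun j ↦ ({c : ι → β | r (c j) (P j)} : Finset _)) =
      ({c | ∀ j ∈ J, r (c j) (P j)} : Finset (ι → β)) := by
    ext c
    simp [Finset.mem_inf]
  have hinf_compl : Finset.univ.inf (fun j ↦ ({c : ι → β | r (c j) (P j)} : Finset _)ᶜ) =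
      ({c | ∀ j, ¬ r (c j) (P j)} : Finset (ι → β)) := by
    ext c
    simp [Finset.mem_inf]
  have hempty : ({J | ¬ J.Nonempty} : Finset (Finset ι)) = {∅} := by
    ext J
    simp
  rw [Finset.powerset_univ, ← Finset.sum_filter_add_sum_filter_not _ Finset.Nonempty, hempty,
    Finset.sum_singleton, ← sub_eq_iff_eq_add'] at h
  simp only [hinf, hinf_compl, Finset.card_empty, pow_zero, one_smul, Finset.notMem_empty,
    false_imp_iff, implies_true, Finset.filter_true] at h
  rw [← h]
  refine enorm_sub_le.trans (add_le_add (enorm_sum_le _ _) ((enorm_sum_le _ _).trans ?_))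
  refine Finset.sum_le_sum fun J _ ↦ le_of_eq ?_
  rcases neg_one_pow_eq_or ℤ J.card with hJ | hJ <;> simp [hJ]

variable [Fintype β] [DecidableEq β] {r : β → β → Prop} [DecidableRel r] {N : ℕ}

theorem sum_nonempty_enorm_sum_rpow_le (hN : 1 ≤ N) (hr : ∀ q, Finset.card {p | r p q} ≤ N)
    (hs : 1 ≤ s) (P : ι → β) (a : (ι → β) → E) :
    (∑ J : Finset ι with J.Nonempty, ‖∑ c with ∀ j ∈ J, r (c j) (P j), a c‖ₑ) ^ s ≤
      ((2 * N) ^ Fintype.card ι : ℝ≥0∞) ^ (s - 1) * ∑ J : Finset ι with J.Nonempty,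
        ∑ b : J → β, ‖∑ c with J.restrict c = b, a c‖ₑ ^ s := by
  have hs' : 0 ≤ s - 1 := sub_nonneg.2 hs
  have hnear (J : Finset ι) : ‖∑ c with ∀ j ∈ J, r (c j) (P j), a c‖ₑ ^ s ≤
      (N ^ Fintype.card ι : ℝ≥0∞) ^ (s - 1) *
        ∑ b : J → β, ‖∑ c with J.restrict c = b, a c‖ₑ ^ s := by
    let T : Finset (J → β) := Fintype.piFinset fun j ↦ {p | r p (P j)}
    have hT : T.card ≤ N ^ Fintype.card ι := by
      rw [Fintype.card_piFinset]
      refine (Finset.prod_le_pow_card _ _ N fun j _ ↦ hr _).trans ?_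
      exact Nat.pow_le_pow_right hN (by simpa using J.card_le_univ)
    have hmem (c : ι → β) : J.restrict c ∈ T ↔ ∀ j ∈ J, r (c j) (P j) := by simp [T]
    have h := enorm_sum_filter_mem_rpow_le hs J.restrict T a
    simp only [hmem] at h
    refine h.trans ?_
    gcongr
    exact_mod_cast hT
  calc _ ≤ _ := ENNReal.rpow_sum_le_const_mul_sum_rpow _ _ hs
    _ ≤ (2 ^ Fintype.card ι : ℝ≥0∞) ^ (s - 1) * ∑ J : Finset ι with J.Nonempty,
          (N ^ Fintype.card ι : ℝ≥0∞) ^ (s - 1) *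
            ∑ b : J → β, ‖∑ c with J.restrict c = b, a c‖ₑ ^ s := by
        gcongr with J
        · exact_mod_cast (Finset.card_le_univ _).trans_eq (by simp)
        · exact hnear J
    _ = _ := by
        rw [← Finset.mul_sum, ← mul_assoc, mul_pow, ENNReal.mul_rpow_of_nonneg _ _ hs']

/-- With `P` the cell carrying the largest term, either the cells that are unrelated to `P` in
every coordinate dominate, or the cells that are related to `P` in some coordinate do. -/
theorem enorm_sum_rpow_le_broad_narrow (hN : 1 ≤ N) (hr : ∀ q, Finset.card {p | r p q} ≤ N)
    (hs : 1 ≤ s) (a : (ι → β) → E) :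
    ‖∑ c, a c‖ₑ ^ s ≤
      (2 * (2 * N) ^ Fintype.card ι : ℝ≥0∞) ^ (s - 1) * ∑ J : Finset ι with J.Nonempty,
          ∑ b : J → β, ‖∑ c with J.restrict c = b, a c‖ₑ ^ s +
        (2 * Fintype.card β ^ Fintype.card ι : ℝ≥0∞) ^ (s - 1) *
          ∑ p : (ι → β) × (ι → β) with ∀ j, ¬ r (p.1 j) (p.2 j),
            (‖a p.1‖ₑ * ‖a p.2‖ₑ) ^ (s / 2) := by
  have hs' : 0 ≤ s - 1 := sub_nonneg.2 hs
  cases isEmpty_or_nonempty (ι → β)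
  · simp [ENNReal.zero_rpow_of_pos (show 0 < s by linarith)]
  obtain ⟨P, hP⟩ := Finite.exists_max fun c ↦ ‖a c‖ₑ
  have hbroad : (∑ c with ∀ j, ¬ r (c j) (P j), ‖a c‖ₑ) ^ s ≤
      (Fintype.card β ^ Fintype.card ι : ℝ≥0∞) ^ (s - 1) *
        ∑ p : (ι → β) × (ι → β) with ∀ j, ¬ r (p.1 j) (p.2 j),
          (‖a p.1‖ₑ * ‖a p.2‖ₑ) ^ (s / 2) := by
    refine (ENNReal.rpow_sum_le_const_mul_sum_rpow _ _ hs).trans ?_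
    gcongr
    · exact_mod_cast (Finset.card_le_univ _).trans_eq (by simp)
    · exact sum_enorm_rpow_le_sum_mul_rpow hP (R := fun c c' ↦ ∀ j, ¬ r (c j) (c' j)) (by linarith)
  calc ‖∑ c, a c‖ₑ ^ s
      ≤ _ := ENNReal.rpow_le_rpow (enorm_sum_le_add_sum_nonempty r P a) (by linarith)
    _ ≤ _ := ENNReal.rpow_add_le_mul_rpow_add_rpow _ _ hs
    _ ≤ _ := mul_le_mul_right
      (add_le_add hbroad (sum_nonempty_enorm_sum_rpow_le hN hr hs P a)) _
    _ = _ := by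
      simp only [ENNReal.mul_rpow_of_nonneg _ _ hs']
      ring

end BroadNarrow

section Fibers

variable {α γ : Type*} {mα : MeasurableSpace α} {μ : Measure α} [MeasurableSpace γ]
  [MeasurableSingletonClass γ] {s : ℝ}

theorem sum_lintegral_enorm_indicator_fiber_rpow [Fintype γ] {E : Type*} [NormedAddCommGroup E]
    {π : α → γ} (hπ : Measurable π) (f : α → E) (hs : 0 < s) :
    ∑ b, ∫⁻ x, ‖(π ⁻¹' {b}).indicator f x‖ₑ ^ s ∂μ = ∫⁻ x, ‖f x‖ₑ ^ s ∂μ := by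
  have hmeas (b : γ) : MeasurableSet (π ⁻¹' {b}) := hπ (measurableSet_singleton b)
  simp only [lintegral_comp_indicator (hmeas _) f (φ := (‖·‖ₑ ^ s)) (by simp [hs])]
  rw [← tsum_fintype (L := .unconditional _),
    ← lintegral_iUnion hmeas (pairwise_disjoint_fiber π), ← Set.preimage_iUnion,
    Set.iUnion_of_singleton, Set.preimage_univ, setLIntegral_univ]

variable {ι κ : Type*} [Fintype ι] [Fintype κ] {Q : (ι → ℝ) → κ → ℝ} {f : (ι → ℝ) → ℂ}
  {π : (ι → ℝ) → γ}

theorem fourierExtension_indicator_preimage_finset (hQ : Measurable Q) (hf : Integrable f)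
    (hπ : Measurable π) (T : Finset γ) (z : (ι → ℝ) × (κ → ℝ)) :
    fourierExtension Q ((π ⁻¹' T).indicator f) z =
      ∑ c ∈ T, fourierExtension Q ((π ⁻¹' {c}).indicator f) z := by
  rw [← fourierExtension_sum hQ T
    fun c _ ↦ hf.indicator (hπ (measurableSet_singleton c))]
  congr 1
  ext ξ
  classical
  simp [Finset.sum_apply, Set.indicator_apply]

theorem lintegral_enorm_fourierExtension_rpow_le_broad_narrow [DecidableEq ι] {β : Type*}
    [Fintype β] [MeasurableSpace β] [MeasurableSingletonClass β] {r : β → β → Prop}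
    [DecidableRel r] {N : ℕ} (hN : 1 ≤ N) (hr : ∀ q, Finset.card {p | r p q} ≤ N)
    (hQ : Measurable Q) (hf : Measurable f) (hfi : Integrable f) {π : (ι → ℝ) → ι → β}
    (hπ : Measurable π) (hs : 1 ≤ s) (μ : Measure ((ι → ℝ) × (κ → ℝ))) :
    ∫⁻ z, ‖fourierExtension Q f z‖ₑ ^ s ∂μ ≤
      (2 * (2 * N) ^ Fintype.card ι : ℝ≥0∞) ^ (s - 1) * ∑ J : Finset ι with J.Nonempty,
          ∑ b : J → β,
            ∫⁻ z, ‖fourierExtension Q (((J.restrict ∘ π) ⁻¹' {b}).indicator f) z‖ₑ ^ s ∂μ +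
        (2 * Fintype.card β ^ Fintype.card ι : ℝ≥0∞) ^ (s - 1) *
          ∑ p : (ι → β) × (ι → β) with ∀ j, ¬ r (p.1 j) (p.2 j),
            ∫⁻ z, (‖fourierExtension Q ((π ⁻¹' {p.1}).indicator f) z‖ₑ *
              ‖fourierExtension Q ((π ⁻¹' {p.2}).indicator f) z‖ₑ) ^ (s / 2) ∂μ := by
  classical
  have hE {S : Set (ι → ℝ)} (hS : MeasurableSet S) :
      Measurable fun z ↦ ‖fourierExtension Q (S.indicator f) z‖ₑ :=
    (measurable_fourierExtension hQ (hf.indicator hS)).enorm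
  have hwhole (z) : fourierExtension Q f z =
      ∑ c, fourierExtension Q ((π ⁻¹' {c}).indicator f) z := by
    simpa using fourierExtension_indicator_preimage_finset hQ hfi hπ Finset.univ z
  have hpart (J : Finset ι) (b : J → β) (z) :
      fourierExtension Q (((J.restrict ∘ π) ⁻¹' {b}).indicator f) z =
        ∑ c with J.restrict c = b, fourierExtension Q ((π ⁻¹' {c}).indicator f) z := by
    rw [← fourierExtension_indicator_preimage_finset hQ hfi hπ]
    simp [Set.preimage]
  have hpoint (c : ι → β) := hE (hπ (measurableSet_singleton c))
  have hfiber (J : Finset ι) (b : J → β) :=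
    (hE ((J.measurable_restrict.comp hπ) (measurableSet_singleton b))).pow_const s
  have hfibers (J : Finset ι) := Finset.measurable_fun_sum Finset.univ fun b _ ↦ hfiber J b
  have hpair (p : (ι → β) × (ι → β)) := ((hpoint p.1).fun_mul (hpoint p.2)).pow_const (s / 2)
  have hpointwise (z) := enorm_sum_rpow_le_broad_narrow hN hr hs
    fun c ↦ fourierExtension Q ((π ⁻¹' {c}).indicator f) z
  simp only [← hwhole, ← hpart] at hpointwise
  refine (lintegral_mono hpointwise).trans_eq ?_
  rw [lintegral_add_right _ ((Finset.measurable_fun_sum _ fun p _ ↦ hpair p).const_mul _),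
    lintegral_const_mul _ (Finset.measurable_fun_sum _ fun J _ ↦ hfibers J),
    lintegral_const_mul _ (Finset.measurable_fun_sum _ fun p _ ↦ hpair p),
    lintegral_finsetSum _ fun J _ ↦ hfibers J, lintegral_finsetSum _ fun p _ ↦ hpair p]
  congr! 4 with J
  exact lintegral_finsetSum _ fun b _ ↦ hfiber J b

end Fibers

section Grid

variable {ι : Type*} {K : ℕ}

theorem card_filter_abs_sub_le_one (q : Fin K) :
    Finset.card {p : Fin K | |(p - q : ℤ)| ≤ 1} ≤ 3 := by
  calc Finset.card {p : Fin K | |(p - q : ℤ)| ≤ 1} ≤ (Finset.Icc (q - 1 : ℤ) (q + 1)).card := by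
        refine Finset.card_le_card_of_injOn (fun p : Fin K ↦ (p : ℤ)) (fun p hp ↦ ?_)
          fun p _ p' _ h ↦ Fin.ext (Int.ofNat.inj h)
        have := abs_le.1 (Finset.mem_filter.1 hp).2
        simp only [Finset.coe_Icc, Set.mem_Icc]
        omega
    _ = 3 := by
        rw [Int.card_Icc]
        ring_nf
        rfl

variable [NeZero K]

/-- The index of the cell containing `ξ` in the partition of the unit cube into `K ^ card ι` cubes
of side `1 / K`. Outside the unit cube the value is irrelevant. -/
noncomputable def gridCell (K : ℕ) [NeZero K] (ξ : ι → ℝ) : ι → Fin K :=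
  fun j ↦ Fin.ofNat K ⌊K * ξ j⌋₊

theorem measurable_gridCell : Measurable (gridCell (ι := ι) K) :=
  measurable_pi_lambda _ fun j ↦ (measurable_from_top (f := Fin.ofNat K)).comp
    (Nat.measurable_floor.comp ((measurable_pi_apply j).const_mul _))

theorem mem_Ico_gridCell {ξ : ι → ℝ} (hξ : ξ ∈ unitCube ι) (j : ι) :
    ξ j ∈ Set.Ico (gridCell K ξ j * (K : ℝ)⁻¹) (gridCell K ξ j * (K : ℝ)⁻¹ + (K : ℝ)⁻¹) := by
  have hK : (0 : ℝ) < K := by exact_mod_cast NeZero.pos K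
  obtain ⟨h0, h1⟩ := hξ j (Set.mem_univ j)
  have hnonneg : 0 ≤ K * ξ j := mul_nonneg hK.le h0
  have hval : (gridCell K ξ j : ℕ) = ⌊K * ξ j⌋₊ :=
    Nat.mod_eq_of_lt ((Nat.floor_lt hnonneg).2 (mul_lt_of_lt_one_right hK h1))
  rw [hval, ← add_one_mul, ← div_eq_mul_inv, ← div_eq_mul_inv]
  exact ⟨(div_le_iff₀' hK).2 (Nat.floor_le hnonneg), (lt_div_iff₀' hK).2 (Nat.lt_floor_add_one _)⟩

theorem inv_le_sub_of_gridCell_add_two_le {ξ η : ι → ℝ} (hξ : ξ ∈ unitCube ι)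
    (hη : η ∈ unitCube ι) {j : ι} (h : (gridCell K η j + 2 : ℕ) ≤ gridCell K ξ j) :
    (K : ℝ)⁻¹ ≤ ξ j - η j := by
  have hlow := (mem_Ico_gridCell (K := K) hξ j).1
  have hupp := (mem_Ico_gridCell (K := K) hη j).2
  have h' : (gridCell K η j + 2 : ℝ) ≤ gridCell K ξ j := by exact_mod_cast h
  have := mul_le_mul_of_nonneg_right h' (inv_nonneg.2 (Nat.cast_nonneg (α := ℝ) K))
  linarith

end Grid

section Induction

variable {ι : Type*} [Fintype ι] [LinearOrder ι] {lam : ι → ι} {f : (ι → ℝ) → ℂ} {s R : ℝ}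
  {W K : ℕ} [NeZero K]

theorem lintegral_enorm_fourierExtension_gridCell_mul_rpow_le (hlam : ∀ j, lam j ≤ j)
    (hs : 4 ≤ s) (hf : Measurable f) (hfi : Integrable f)
    (hfS : Function.support f ⊆ unitCube ι) {c c' : ι → Fin K}
    (hcc' : ∀ j, ¬ |(c j - c' j : ℤ)| ≤ 1) :
    ∫⁻ z, (‖fourierExtension (monomialMap lam) ((gridCell K ⁻¹' {c}).indicator f) z‖ₑ *
        ‖fourierExtension (monomialMap lam) ((gridCell K ⁻¹' {c'}).indicator f) z‖ₑ) ^ (s / 2) ≤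
      (K : ℝ≥0∞) ^ Fintype.card ι * ∫⁻ ξ, ‖f ξ‖ₑ ^ s := by
  have hK : (0 : ℝ) < K := by exact_mod_cast NeZero.pos K
  have hcell (c : ι → Fin K) : MeasurableSet (gridCell K ⁻¹' {c}) :=
    measurable_gridCell (measurableSet_singleton c)
  have hsupp (c : ι → Fin K) :
      Function.support ((gridCell K ⁻¹' {c}).indicator f) ⊆ unitCube ι := by
    rw [Set.support_indicator]
    exact Set.inter_subset_right.trans hfS
  have hsep (ξ η : ι → ℝ) (hξ : (gridCell K ⁻¹' {c}).indicator f ξ ≠ 0)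
      (hη : (gridCell K ⁻¹' {c'}).indicator f η ≠ 0) (j : ι) :
      (K : ℝ)⁻¹ ≤ (if c' j < c j then 1 else -1) * (ξ j - η j) := by
    obtain rfl := Set.mem_of_indicator_ne_zero hξ
    obtain rfl := Set.mem_of_indicator_ne_zero hη
    have hfar := hcc' j
    rw [abs_le, not_and_or] at hfar
    split_ifs with h <;> rw [Fin.lt_def] at h
    · rw [one_mul]
      exact inv_le_sub_of_gridCell_add_two_le (hsupp _ hξ) (hsupp _ hη) (by omega)
    · rw [neg_one_mul, neg_sub]
      exact inv_le_sub_of_gridCell_add_two_le (hsupp _ hη) (hsupp _ hξ) (by omega)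
  calc _ ≤ _ := lintegral_enorm_fourierExtension_mul_rpow_le hlam
        (fun j ↦ by split_ifs <;> simp) (inv_pos.2 hK) hs (hf.indicator (hcell c))
        (hf.indicator (hcell c')) (hfi.indicator (hcell c)) (hfi.indicator (hcell c'))
        (hsupp c) (hsupp c') hsep
    _ ≤ ENNReal.ofReal ((K : ℝ)⁻¹ ^ Fintype.card ι)⁻¹ *
          ((∫⁻ ξ, ‖f ξ‖ₑ ^ s) ^ (1 / 2 : ℝ) * (∫⁻ ξ, ‖f ξ‖ₑ ^ s) ^ (1 / 2 : ℝ)) := by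
        gcongr <;> exact enorm_indicator_le_enorm_self f _
    _ = _ := by
        rw [← ENNReal.rpow_add_of_nonneg _ _ (by norm_num) (by norm_num), add_halves,
          ENNReal.rpow_one, inv_pow, inv_inv, ENNReal.ofReal_pow hK.le, ENNReal.ofReal_natCast]

theorem IsExtensionBound.setLIntegral_gridCell_fiber_le {A : ℝ≥0∞}
    (hA : IsExtensionBound (monomialMap lam) s R A) (hs : 0 ≤ s)
    (hW : ∀ j, Finset.card {i | lam i = j} ≤ W) (hf : Measurable f) (hfi : Integrable f)
    (hfS : Function.support f ⊆ unitCube ι) {J : Finset ι} (hJ : J.Nonempty) (b : J → Fin K) :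
    ∫⁻ z in Set.univ ×ˢ Metric.closedBall 0 R, ‖fourierExtension (monomialMap lam)
        (((J.restrict ∘ gridCell K) ⁻¹' {b}).indicator f) z‖ₑ ^ s ≤
      ENNReal.ofReal ((K : ℝ)⁻¹ ^ (s - 3 - W)) * A *
        ∫⁻ ξ, ‖((J.restrict ∘ gridCell K) ⁻¹' {b}).indicator f ξ‖ₑ ^ s := by
  obtain ⟨j, hj⟩ := hJ
  have hK : (1 : ℝ) ≤ K := by exact_mod_cast NeZero.one_le
  have hfiber : MeasurableSet ((J.restrict ∘ gridCell K) ⁻¹' {b}) :=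
    (J.measurable_restrict.comp measurable_gridCell) (measurableSet_singleton b)
  refine hA.of_slab hs (hW j) (inv_pos.2 (by linarith)) (inv_le_one_of_one_le₀ hK)
    (b := b ⟨j, hj⟩ * (K : ℝ)⁻¹) (hf.indicator hfiber) (hfi.indicator hfiber) ?_ fun ξ hξ ↦ ?_
  · rw [Set.support_indicator]
    exact Set.inter_subset_right.trans hfS
  · obtain rfl := Set.mem_of_indicator_ne_zero hξ
    exact mem_Ico_gridCell (hfS (Set.indicator_apply_ne_zero.1 hξ).2) j

theorem IsExtensionBound.sum_setLIntegral_gridCell_fiber_le {A : ℝ≥0∞}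
    (hA : IsExtensionBound (monomialMap lam) s R A) (hs : 0 < s)
    (hW : ∀ j, Finset.card {i | lam i = j} ≤ W) (hf : Measurable f) (hfi : Integrable f)
    (hfS : Function.support f ⊆ unitCube ι) :
    ∑ J : Finset ι with J.Nonempty, ∑ b : J → Fin K,
        ∫⁻ z in Set.univ ×ˢ Metric.closedBall 0 R, ‖fourierExtension (monomialMap lam)
          (((J.restrict ∘ gridCell K) ⁻¹' {b}).indicator f) z‖ₑ ^ s ≤
      2 ^ Fintype.card ι *
        (ENNReal.ofReal ((K : ℝ)⁻¹ ^ (s - 3 - W)) * A * ∫⁻ ξ, ‖f ξ‖ₑ ^ s) := by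
  calc _ ≤ ∑ J : Finset ι with J.Nonempty,
          ENNReal.ofReal ((K : ℝ)⁻¹ ^ (s - 3 - W)) * A * ∫⁻ ξ, ‖f ξ‖ₑ ^ s := by
        refine Finset.sum_le_sum fun J hJ ↦ (Finset.sum_le_sum fun b _ ↦
          hA.setLIntegral_gridCell_fiber_le hs.le hW hf hfi hfS
            (Finset.mem_filter.1 hJ).2 b).trans_eq ?_
        rw [← Finset.mul_sum, sum_lintegral_enorm_indicator_fiber_rpow
          (J.measurable_restrict.comp measurable_gridCell) f hs]
    _ ≤ _ := by
        rw [Finset.sum_const, nsmul_eq_mul]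
        gcongr
        exact_mod_cast (Finset.card_le_univ _).trans_eq (by simp)

theorem sum_lintegral_gridCell_mul_rpow_le (hlam : ∀ j, lam j ≤ j) (hs : 4 ≤ s)
    (hf : Measurable f) (hfi : Integrable f) (hfS : Function.support f ⊆ unitCube ι) :
    ∑ p : (ι → Fin K) × (ι → Fin K) with ∀ j, ¬ |(p.1 j - p.2 j : ℤ)| ≤ 1,
        ∫⁻ z, (‖fourierExtension (monomialMap lam) ((gridCell K ⁻¹' {p.1}).indicator f) z‖ₑ *
          ‖fourierExtension (monomialMap lam) ((gridCell K ⁻¹' {p.2}).indicator f) z‖ₑ) ^ (s / 2) ≤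
      (K ^ Fintype.card ι) ^ 3 * ∫⁻ ξ, ‖f ξ‖ₑ ^ s := by
  calc _ ≤ ∑ p : (ι → Fin K) × (ι → Fin K) with ∀ j, ¬ |(p.1 j - p.2 j : ℤ)| ≤ 1,
          (K : ℝ≥0∞) ^ Fintype.card ι * ∫⁻ ξ, ‖f ξ‖ₑ ^ s :=
        Finset.sum_le_sum fun p hp ↦ lintegral_enorm_fourierExtension_gridCell_mul_rpow_le
          hlam hs hf hfi hfS (Finset.mem_filter.1 hp).2
    _ ≤ (K ^ Fintype.card ι) ^ 2 * (K ^ Fintype.card ι * ∫⁻ ξ, ‖f ξ‖ₑ ^ s) := by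
        rw [Finset.sum_const, nsmul_eq_mul]
        gcongr
        exact_mod_cast (Finset.card_le_univ _).trans_eq (by simp [sq])
    _ = _ := by ring

theorem IsExtensionBound.add_of_gridCell {A : ℝ≥0∞} (hA : IsExtensionBound (monomialMap lam) s R A)
    (hlam : ∀ j, lam j ≤ j) (hW : ∀ j, Finset.card {i | lam i = j} ≤ W) (hs : 4 ≤ s) (K : ℕ)
    [NeZero K] :
    IsExtensionBound (monomialMap lam) s R
      ((2 * (2 * 3) ^ Fintype.card ι) ^ (s - 1) * 2 ^ Fintype.card ι *
          ENNReal.ofReal ((K : ℝ)⁻¹ ^ (s - 3 - W)) * A +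
        (2 * K ^ Fintype.card ι) ^ (s - 1) * (K ^ Fintype.card ι) ^ 3) := by
  intro f hf hfi hfS
  have hbn := lintegral_enorm_fourierExtension_rpow_le_broad_narrow (N := 3)
    (by norm_num) card_filter_abs_sub_le_one measurable_monomialMap hf hfi
    (measurable_gridCell (K := K)) (by linarith : 1 ≤ s)
    (volume.restrict (Set.univ ×ˢ Metric.closedBall 0 R)) (Q := monomialMap lam)
  simp only [Fintype.card_fin, Nat.cast_ofNat] at hbn
  have hnarrow := hA.sum_setLIntegral_gridCell_fiber_le (K := K) (by linarith) hW hf hfi hfS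
  have hbroad := (Finset.sum_le_sum fun p _ ↦
      setLIntegral_le_lintegral (Set.univ ×ˢ Metric.closedBall 0 R) _).trans
    (sum_lintegral_gridCell_mul_rpow_le (K := K) hlam hs hf hfi hfS)
  calc _ ≤ _ := hbn
    _ ≤ _ := add_le_add (mul_le_mul_right hnarrow _) (mul_le_mul_right hbroad _)
    _ = _ := by ring

theorem exists_isExtensionBound_half_add (hlam : ∀ j, lam j ≤ j)
    (hW : ∀ j, Finset.card {i | lam i = j} ≤ W) (hs : 4 ≤ s) (hsW : W + 3 < s) :
    ∃ B : ℝ≥0∞, B ≠ 0 ∧ B ≠ ⊤ ∧ ∀ R A, IsExtensionBound (monomialMap lam) s R A →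
      IsExtensionBound (monomialMap lam) s R (2⁻¹ * A + B) := by
  have hs' : 0 ≤ s - 1 := by linarith
  obtain ⟨K, hK⟩ : ∃ K : ℕ, (2 * (2 * 3) ^ Fintype.card ι) ^ (s - 1) * 2 ^ Fintype.card ι *
      ENNReal.ofReal (((K + 1 : ℕ) : ℝ)⁻¹ ^ (s - 3 - W)) ≤ 2⁻¹ := by
    have hexp : 0 < s - 3 - W := by linarith
    have hside : Filter.Tendsto (fun K : ℕ ↦ ((K + 1 : ℕ) : ℝ)⁻¹ ^ (s - 3 - W)) Filter.atTop
        (nhds 0) := by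
      simpa [Real.zero_rpow hexp.ne'] using
        (tendsto_inv_atTop_nhds_zero_nat.comp (Filter.tendsto_add_atTop_nat 1)).rpow_const
          (Or.inr hexp.le)
    have hlim := ENNReal.Tendsto.const_mul
      (a := (2 * (2 * 3) ^ Fintype.card ι) ^ (s - 1) * 2 ^ Fintype.card ι)
      (ENNReal.tendsto_ofReal hside) (Or.inr (by finiteness))
    rw [ENNReal.ofReal_zero, mul_zero] at hlim
    exact (hlim.eventually_le_const (by simp)).exists
  refine ⟨(2 * (K + 1 : ℕ) ^ Fintype.card ι) ^ (s - 1) * ((K + 1 : ℕ) ^ Fintype.card ι) ^ 3,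
    by positivity, by finiteness, fun R A hA f hf hfi hfS ↦ ?_⟩
  refine (hA.add_of_gridCell hlam hW hs (K + 1) f hf hfi hfS).trans ?_
  gcongr

/-- The a priori bound, which depends on `R`, is improved by induction until it does not. -/
theorem exists_isExtensionBound (hlam : ∀ j, lam j ≤ j)
    (hW : ∀ j, Finset.card {i | lam i = j} ≤ W) (hs : 4 ≤ s) (hsW : W + 3 < s) :
    ∃ B : ℝ≥0∞, B ≠ ⊤ ∧ ∀ f : (ι → ℝ) → ℂ, Measurable f → Integrable f →
      Function.support f ⊆ unitCube ι →
        ∫⁻ z, ‖fourierExtension (monomialMap lam) f z‖ₑ ^ s ≤ B * ∫⁻ ξ, ‖f ξ‖ₑ ^ s := by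
  obtain ⟨B, hB0, hB, hstep⟩ := exists_isExtensionBound_half_add hlam hW hs hsW
  have htruncated (R : ℝ) : IsExtensionBound (monomialMap lam) s R (3 * B) := by
    obtain ⟨A, hA, hAB⟩ := exists_le_three_mul_of_half_add
      (S := {A | IsExtensionBound (monomialMap lam) s R A}) measure_closedBall_lt_top.ne hB0
      (isExtensionBound_volume_closedBall measurable_monomialMap (by linarith)) (hstep R)
    exact fun f hf hfi hfS ↦ (hA f hf hfi hfS).trans (by gcongr)
  refine ⟨3 * B, by finiteness, fun f hf hfi hfS ↦ ?_⟩
  have hunion :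
      ⋃ m : ℕ, (Set.univ ×ˢ Metric.closedBall 0 m : Set ((ι → ℝ) × (ι → ℝ))) = Set.univ := by
    rw [← Set.prod_iUnion, Metric.iUnion_closedBall_nat, Set.univ_prod_univ]
  have hmono : Monotone fun m : ℕ ↦
      (Set.univ ×ˢ Metric.closedBall 0 m : Set ((ι → ℝ) × (ι → ℝ))) := fun m m' h ↦
    Set.prod_mono_right (Metric.closedBall_subset_closedBall (by exact_mod_cast h))
  rw [← setLIntegral_univ, ← hunion, setLIntegral_iUnion_of_directed _ hmono.directed_le]
  exact iSup_le fun m ↦ htruncated m f hf hfi hfS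

end Induction

section Interpolation

theorem rpow_mul_setLIntegral_rpow_le {c M : ℝ≥0∞} (hc : c ≠ ⊤) (hM : M ≠ ⊤) {r : ℝ}
    (hr : 0 < r) :
    c ^ r * ∫⁻ t in {t : ℝ | c * ENNReal.ofReal t ≤ M} ∩ Set.Ioi 0, ENNReal.ofReal (t ^ (r - 1)) ≤
      M ^ r / ENNReal.ofReal r := by
  obtain rfl | hc0 := eq_or_ne c 0
  · simp [hr]
  have hsub : {t : ℝ | c * ENNReal.ofReal t ≤ M} ∩ Set.Ioi 0 ⊆ Set.Ioc 0 (M / c).toReal := by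
    rintro t ⟨ht, ht0⟩
    refine ⟨ht0, ENNReal.ofReal_le_iff_le_toReal (ENNReal.div_ne_top hM hc0) |>.1 ?_⟩
    exact (ENNReal.le_div_iff_mul_le (.inl hc0) (.inl hc)).2 (mul_comm c _ ▸ ht)
  have hint : ∫⁻ t in Set.Ioc 0 (M / c).toReal, ENNReal.ofReal (t ^ (r - 1)) =
      (M / c) ^ r / ENNReal.ofReal r := by
    have hexp : -1 < r - 1 := by linarith
    rw [← ofReal_integral_eq_lintegral_ofReal,
      ← intervalIntegral.integral_of_le ENNReal.toReal_nonneg, integral_rpow (.inl hexp),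
      sub_add_cancel, Real.zero_rpow hr.ne', sub_zero,
      ENNReal.ofReal_div_of_pos hr, ← ENNReal.ofReal_rpow_of_nonneg ENNReal.toReal_nonneg hr.le,
      ENNReal.ofReal_toReal (ENNReal.div_ne_top hM hc0)]
    · exact (intervalIntegrable_iff_integrableOn_Ioc_of_le ENNReal.toReal_nonneg).1
        (intervalIntegral.intervalIntegrable_rpow' hexp)
    · filter_upwards [ae_restrict_mem measurableSet_Ioc] with t ht using Real.rpow_nonneg ht.1.le _
  calc _ ≤ c ^ r * ((M / c) ^ r / ENNReal.ofReal r) := by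
        rw [← hint]
        gcongr
    _ = M ^ r / ENNReal.ofReal r := by
        rw [← mul_div_assoc, ← ENNReal.mul_rpow_of_nonneg _ _ hr.le, ENNReal.mul_div_cancel hc0 hc]

theorem rpow_mul_setLIntegral_rpow_sub_le {a M : ℝ≥0∞} (ha : a ≠ ⊤) (hM : M ≠ ⊤) {p q s : ℝ}
    (hp : 1 < p) (hsq : s < q) (hpq : p * (q - s + 1) = q) :
    a ^ s * ∫⁻ t in {t : ℝ | a ^ (p - 1) * ENNReal.ofReal t ≤ M} ∩ Set.Ioi 0,
      ENNReal.ofReal (t ^ (q - s - 1)) ≤ a ^ p * (M ^ (q - s) / ENNReal.ofReal (q - s)) := by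
  have hsplit : a ^ s = a ^ p * (a ^ (p - 1)) ^ (q - s) := by
    rw [← ENNReal.rpow_mul, ← ENNReal.rpow_add_of_nonneg _ _ (by positivity) (by nlinarith)]
    congr 1
    linear_combination -hpq
  rw [hsplit, mul_assoc]
  gcongr
  exact rpow_mul_setLIntegral_rpow_le (by finiteness) hM (sub_pos.2 hsq)

variable {α β E F : Type*} {mα : MeasurableSpace α} {mβ : MeasurableSpace β} {μ : Measure α}
  {ν : Measure β}

theorem lintegral_mul_setLIntegral_swap [SFinite μ] [SFinite ν] {A : Set (α × β)}
    (hA : MeasurableSet A) {g : α → ℝ≥0∞} (hg : Measurable g) {h : β → ℝ≥0∞} (hh : Measurable h) :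
    ∫⁻ y, h y * ∫⁻ x in {x | (x, y) ∈ A}, g x ∂μ ∂ν =
      ∫⁻ x, g x * ∫⁻ y in {y | (x, y) ∈ A}, h y ∂ν ∂μ := by
  have hmeas : Measurable (A.indicator fun z : α × β ↦ g z.1 * h z.2) :=
    ((hg.comp measurable_fst).mul (hh.comp measurable_snd)).indicator hA
  calc _ = ∫⁻ y, ∫⁻ x, A.indicator (fun z ↦ g z.1 * h z.2) (x, y) ∂μ ∂ν := by
        refine lintegral_congr fun y ↦ ?_
        rw [← lintegral_const_mul _ hg,
          ← lintegral_indicator (s := {x | (x, y) ∈ A}) (measurable_prodMk_right hA)]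
        exact lintegral_congr fun x ↦ by simp only [Set.indicator, mul_comm]; rfl
    _ = ∫⁻ x, ∫⁻ y, A.indicator (fun z ↦ g z.1 * h z.2) (x, y) ∂ν ∂μ :=
        lintegral_lintegral_swap (hmeas.comp measurable_swap).aemeasurable
    _ = _ := by
        refine lintegral_congr fun x ↦ ?_
        rw [← lintegral_const_mul _ hh,
          ← lintegral_indicator (s := {y | (x, y) ∈ A}) (measurable_prodMk_left hA)]
        rfl

variable [NormedAddCommGroup E] [NormedAddCommGroup F] [MeasurableSpace E]
  [OpensMeasurableSpace E] {f : α → E} {T : (α → E) → β → F} {p q s : ℝ} {B : ℝ≥0∞}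

theorem two_mul_setLIntegral_enorm_le (hf : Measurable f) (hp : 1 < p)
    (hfp : ∫⁻ x, ‖f x‖ₑ ^ p ∂μ ≠ ⊤) {t : ℝ≥0∞} :
    2 * ∫⁻ x in {x | ‖f x‖ₑ ^ (p - 1) * t ≤ 2 * ∫⁻ x, ‖f x‖ₑ ^ p ∂μ}ᶜ, ‖f x‖ₑ ∂μ ≤ t := by
  set N := ∫⁻ x, ‖f x‖ₑ ^ p ∂μ with hN
  obtain hN0 | hN0 := eq_or_ne N 0
  · have hzero : ∀ᵐ x ∂μ, ‖f x‖ₑ = 0 := by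
      filter_upwards [(lintegral_eq_zero_iff (hf.enorm.pow_const p)).1 (hN ▸ hN0)] with x hx
      simpa [show 0 < p by linarith] using hx
    rw [lintegral_congr_ae (ae_restrict_of_ae hzero)]
    simp
  set S := {x | ‖f x‖ₑ ^ (p - 1) * t ≤ 2 * N}
  have hS : MeasurableSet S :=
    measurableSet_le ((hf.enorm.pow_const _).mul_const _) measurable_const
  have hlarge : ∀ x ∈ Sᶜ, 2 * N * ‖f x‖ₑ ≤ ‖f x‖ₑ ^ p * t := fun x hx ↦
    calc 2 * N * ‖f x‖ₑ ≤ ‖f x‖ₑ ^ (p - 1) * t * ‖f x‖ₑ := by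
          gcongr ?_ * _
          exact le_of_not_ge (Set.notMem_of_mem_compl hx)
      _ = ‖f x‖ₑ ^ p * t := by
          nth_rw 2 [← ENNReal.rpow_one ‖f x‖ₑ]
          rw [mul_right_comm, ← ENNReal.rpow_add_of_nonneg _ _ (by linarith) zero_le_one,
            sub_add_cancel]
  refine (ENNReal.mul_le_mul_iff_right hN0 hfp).1 ?_
  calc N * (2 * ∫⁻ x in Sᶜ, ‖f x‖ₑ ∂μ) = ∫⁻ x in Sᶜ, 2 * N * ‖f x‖ₑ ∂μ := by
        rw [lintegral_const_mul _ hf.enorm, mul_comm 2 N, mul_assoc]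
    _ ≤ ∫⁻ x in Sᶜ, ‖f x‖ₑ ^ p * t ∂μ := setLIntegral_mono' hS.compl hlarge
    _ ≤ ∫⁻ x, ‖f x‖ₑ ^ p * t ∂μ := setLIntegral_le_lintegral _ _
    _ = N * t := lintegral_mul_const _ (hf.enorm.pow_const p)

theorem meas_lt_enorm_le (hf : Measurable f) (hp : 1 < p) (hs : 0 < s)
    (hfp : ∫⁻ x, ‖f x‖ₑ ^ p ∂μ ≠ ⊤)
    (hTm : ∀ S, MeasurableSet S → AEStronglyMeasurable (T (S.indicator f)) ν)
    (hT : ∀ S, MeasurableSet S → ∀ y, ‖T f y‖ₑ ≤ ‖T (S.indicator f) y‖ₑ + ∫⁻ x in Sᶜ, ‖f x‖ₑ ∂μ)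
    (hTs : ∀ S, MeasurableSet S →
      ∫⁻ y, ‖T (S.indicator f) y‖ₑ ^ s ∂ν ≤ B * ∫⁻ x in S, ‖f x‖ₑ ^ s ∂μ) {t : ℝ} (ht : 0 < t) :
    ν {y | t < ‖T f y‖} ≤ 2 ^ s * B * ENNReal.ofReal (t ^ (-s)) * ∫⁻ x in
      {x | ‖f x‖ₑ ^ (p - 1) * ENNReal.ofReal t ≤ 2 * ∫⁻ x, ‖f x‖ₑ ^ p ∂μ}, ‖f x‖ₑ ^ s ∂μ := by
  set S := {x | ‖f x‖ₑ ^ (p - 1) * ENNReal.ofReal t ≤ 2 * ∫⁻ x, ‖f x‖ₑ ^ p ∂μ}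
  have hS : MeasurableSet S :=
    measurableSet_le ((hf.enorm.pow_const _).mul_const _) measurable_const
  have hsub : {y | t < ‖T f y‖} ⊆
      {y | ENNReal.ofReal t ^ s ≤ 2 ^ s * ‖T (S.indicator f) y‖ₑ ^ s} := by
    intro y (hy : t < ‖T f y‖)
    have htwo : 2 * ENNReal.ofReal t ≤ 2 * ‖T (S.indicator f) y‖ₑ + ENNReal.ofReal t :=
      calc 2 * ENNReal.ofReal t ≤ 2 * ‖T f y‖ₑ := by
            rw [← ofReal_norm]
            gcongr
        _ ≤ 2 * (‖T (S.indicator f) y‖ₑ + ∫⁻ x in Sᶜ, ‖f x‖ₑ ∂μ) := by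
            gcongr
            exact hT S hS y
        _ ≤ _ := by
            rw [mul_add]
            gcongr
            exact two_mul_setLIntegral_enorm_le hf hp hfp
    rw [two_mul, ENNReal.add_le_add_iff_right ENNReal.ofReal_ne_top] at htwo
    rw [Set.mem_ofPred_eq, ← ENNReal.mul_rpow_of_nonneg _ _ hs.le]
    gcongr
  calc ν {y | t < ‖T f y‖} ≤ _ := measure_mono hsub
    _ ≤ (∫⁻ y, 2 ^ s * ‖T (S.indicator f) y‖ₑ ^ s ∂ν) / ENNReal.ofReal t ^ s :=
        meas_ge_le_lintegral_div (((hTm S hS).enorm.pow_const s).const_mul _) (by positivity)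
          (by finiteness)
    _ ≤ (2 ^ s * (B * ∫⁻ x in S, ‖f x‖ₑ ^ s ∂μ)) / ENNReal.ofReal t ^ s := by
        rw [lintegral_const_mul' _ _ (by finiteness)]
        gcongr
        exact hTs S hS
    _ = _ := by
        rw [← ENNReal.ofReal_rpow_of_pos ht, ENNReal.rpow_neg, div_eq_mul_inv]
        ring

theorem lintegral_rpow_mul_setLIntegral_rpow_le [SFinite μ] (hf : Measurable f) (hp : 1 < p)
    (hsq : s < q) (hpq : p * (q - s + 1) = q) {M : ℝ≥0∞} (hM : M ≠ ⊤) :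
    ∫⁻ t in Set.Ioi 0, ENNReal.ofReal (t ^ (q - s - 1)) *
        ∫⁻ x in {x | ‖f x‖ₑ ^ (p - 1) * ENNReal.ofReal t ≤ M}, ‖f x‖ₑ ^ s ∂μ ≤
      (∫⁻ x, ‖f x‖ₑ ^ p ∂μ) * (M ^ (q - s) / ENNReal.ofReal (q - s)) := by
  set A := {z : α × ℝ | ‖f z.1‖ₑ ^ (p - 1) * ENNReal.ofReal z.2 ≤ M}
  have hA : MeasurableSet A := measurableSet_le (by fun_prop) measurable_const
  have hA_prodMk (x : α) : MeasurableSet {t | (x, t) ∈ A} := measurable_prodMk_left hA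
  calc _ = ∫⁻ x, ‖f x‖ₑ ^ s *
          (∫⁻ t : ℝ in {t | (x, t) ∈ A} ∩ Set.Ioi 0, ENNReal.ofReal (t ^ (q - s - 1))) ∂μ := by
        refine (lintegral_mul_setLIntegral_swap hA (by fun_prop) (by fun_prop)).trans ?_
        simp_rw [Measure.restrict_restrict (hA_prodMk _)]
    _ ≤ ∫⁻ x, ‖f x‖ₑ ^ p * (M ^ (q - s) / ENNReal.ofReal (q - s)) ∂μ :=
        lintegral_mono fun x ↦ rpow_mul_setLIntegral_rpow_sub_le (by finiteness) hM hp hsq hpq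
    _ = _ := lintegral_mul_const _ (by fun_prop)

/-- Real interpolation: at height `t` the input is truncated so that the discarded part has `L^1`
norm at most `t / 2`. -/
theorem lintegral_enorm_rpow_le_of_indicator_bounds [SFinite μ] (hf : Measurable f) (hp : 1 < p)
    (hB : B ≠ ⊤) (hs : 0 < s) (hsq : s < q) (hpq : p * (q - s + 1) = q)
    (hfp : ∫⁻ x, ‖f x‖ₑ ^ p ∂μ ≠ ⊤)
    (hTm : ∀ S, MeasurableSet S → AEStronglyMeasurable (T (S.indicator f)) ν)
    (hT : ∀ S, MeasurableSet S → ∀ y, ‖T f y‖ₑ ≤ ‖T (S.indicator f) y‖ₑ + ∫⁻ x in Sᶜ, ‖f x‖ₑ ∂μ)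
    (hTs : ∀ S, MeasurableSet S →
      ∫⁻ y, ‖T (S.indicator f) y‖ₑ ^ s ∂ν ≤ B * ∫⁻ x in S, ‖f x‖ₑ ^ s ∂μ) :
    ∫⁻ y, ‖T f y‖ₑ ^ q ∂ν ≤ ENNReal.ofReal q * (2 ^ s * B) *
      (2 ^ (q - s) / ENNReal.ofReal (q - s)) * (∫⁻ x, ‖f x‖ₑ ^ p ∂μ) ^ (q / p) := by
  have hr : 0 < q - s := sub_pos.2 hsq
  have hq : 0 < q := hs.trans hsq
  set N := ∫⁻ x, ‖f x‖ₑ ^ p ∂μ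
  have hTf : AEMeasurable (fun y ↦ ‖T f y‖) ν := by
    simpa only [Set.indicator_univ] using (hTm _ .univ).norm.aemeasurable
  have hlevel {t : ℝ} (ht : 0 < t) : ν {y | t < ‖T f y‖} * ENNReal.ofReal (t ^ (q - 1)) ≤
      2 ^ s * B * (ENNReal.ofReal (t ^ (q - s - 1)) *
        ∫⁻ x in {x | ‖f x‖ₑ ^ (p - 1) * ENNReal.ofReal t ≤ 2 * N}, ‖f x‖ₑ ^ s ∂μ) := by
    refine (mul_le_mul_left (meas_lt_enorm_le hf hp hs hfp hTm hT hTs ht) _).trans_eq ?_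
    rw [show q - s - 1 = -s + (q - 1) by ring, Real.rpow_add ht, ENNReal.ofReal_mul (by positivity)]
    ring
  calc ∫⁻ y, ‖T f y‖ₑ ^ q ∂ν
      = ENNReal.ofReal q *
          ∫⁻ t in Set.Ioi 0, ν {y | t < ‖T f y‖} * ENNReal.ofReal (t ^ (q - 1)) := by
        rw [← lintegral_rpow_eq_lintegral_meas_lt_mul ν (.of_forall fun y ↦ norm_nonneg _) hTf hq]
        simp_rw [← ofReal_norm, ENNReal.ofReal_rpow_of_nonneg (norm_nonneg _) hq.le]
    _ ≤ ENNReal.ofReal q * ∫⁻ t in Set.Ioi 0, 2 ^ s * B * (ENNReal.ofReal (t ^ (q - s - 1)) *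
          ∫⁻ x in {x | ‖f x‖ₑ ^ (p - 1) * ENNReal.ofReal t ≤ 2 * N}, ‖f x‖ₑ ^ s ∂μ) := by
        gcongr ENNReal.ofReal q * ?_
        exact setLIntegral_mono' measurableSet_Ioi fun t ht ↦ hlevel ht
    _ ≤ ENNReal.ofReal q * (2 ^ s * B * (N * ((2 * N) ^ (q - s) / ENNReal.ofReal (q - s)))) := by
        rw [lintegral_const_mul' _ _ (by finiteness)]
        gcongr
        exact lintegral_rpow_mul_setLIntegral_rpow_le hf hp hsq hpq (by finiteness)
    _ = _ := by
        rw [ENNReal.mul_rpow_of_nonneg _ _ hr.le,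
          show q / p = 1 + (q - s) by field_simp; linear_combination -hpq,
          ENNReal.rpow_add_of_nonneg _ _ zero_le_one hr.le, ENNReal.rpow_one]
        simp only [div_eq_mul_inv]
        ring

end Interpolation

section LpBounds

theorem eLpNorm_le_eLpNorm_of_support_subset {α E : Type*} {mα : MeasurableSpace α}
    {μ : Measure α} [NormedAddCommGroup E] {f : α → E} (hf : AEStronglyMeasurable f μ) {S : Set α}
    (hS : μ S = 1) (hfS : Function.support f ⊆ S) {p q : ℝ≥0∞} (hpq : p ≤ q) :
    eLpNorm f p μ ≤ eLpNorm f q μ := by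
  have : IsProbabilityMeasure (μ.restrict S) := ⟨by rw [Measure.restrict_apply_univ, hS]⟩
  rw [← eLpNorm_restrict_eq_of_support_subset hfS,
    ← eLpNorm_restrict_eq_of_support_subset hfS (p := q)]
  exact eLpNorm_le_eLpNorm_of_exponent_le hpq hf.restrict

theorem eLpNorm_ofReal {α E : Type*} {mα : MeasurableSpace α} {μ : Measure α}
    [NormedAddCommGroup E] (f : α → E) {t : ℝ} (ht : 0 < t) :
    eLpNorm f (ENNReal.ofReal t) μ = (∫⁻ x, ‖f x‖ₑ ^ t ∂μ) ^ (1 / t) := by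
  rw [eLpNorm_eq_lintegral_rpow_enorm_toReal (by simpa) ENNReal.ofReal_ne_top,
    ENNReal.toReal_ofReal ht.le]

theorem exists_interpolation_exponents {p q : ℝ≥0∞} {W : ℕ} (hp : 1 ≤ p) (hq_top : q ≠ ⊤)
    (hq : W + 3 < q) (hpq : 1 / p + (W + 2) / q < 1) :
    ∃ r s : ℝ, 1 < r ∧ ENNReal.ofReal r ≤ p ∧ W + 3 < s ∧ s < q.toReal ∧
      r * (q.toReal - s + 1) = q.toReal := by
  have hqW : W + 3 < q.toReal := by
    simpa [ENNReal.toReal_add] using ENNReal.toReal_strict_mono hq_top hq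
  have hq0 : 0 < q.toReal := by linarith [W.cast_nonneg (α := ℝ)]
  have hpinv : p⁻¹ ≠ ⊤ := ENNReal.inv_ne_top.2 (one_pos.trans_le hp).ne'
  have hpq_real : p⁻¹.toReal + (W + 2) / q.toReal < 1 := by
    have hW2 : (W + 2) / q ≠ ⊤ := ENNReal.div_ne_top (by finiteness) hq.ne_bot
    simpa [ENNReal.toReal_add, hpinv, hW2, ENNReal.toReal_div] using
      ENNReal.toReal_strict_mono ENNReal.one_ne_top hpq
  have hlt : (W + 3 : ℝ) < min q.toReal (q.toReal * (1 - p⁻¹.toReal) + 1) := by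
    rw [← lt_sub_iff_add_lt', div_lt_iff₀ hq0] at hpq_real
    exact lt_min hqW (by linarith)
  obtain ⟨s, hs, hsq⟩ := exists_between hlt
  rw [lt_min_iff] at hsq
  have hs0 : 1 < s := by linarith [W.cast_nonneg (α := ℝ)]
  refine ⟨q.toReal / (q.toReal - s + 1), s, ?_, ?_, hs, hsq.1, ?_⟩
  · rw [one_lt_div (by linarith)]
    linarith
  · rw [← ENNReal.inv_le_inv, ← ENNReal.ofReal_inv_of_pos (by bound), inv_div,
      ENNReal.le_ofReal_iff_toReal_le hpinv (by bound), le_div_iff₀ hq0]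
    linarith
  · exact div_mul_cancel₀ _ (by linarith)

variable {ι κ : Type*} [Fintype ι] [Fintype κ] {Q : (ι → ℝ) → κ → ℝ} {f : (ι → ℝ) → ℂ} {p : ℝ≥0∞}

theorem eLpNorm_top_fourierExtension_le (hf : Measurable f)
    (hfS : Function.support f ⊆ unitCube ι) (hp : 1 ≤ p) :
    eLpNorm (fourierExtension Q f) ⊤ volume ≤ eLpNorm f p volume := by
  rw [eLpNorm_exponent_top]
  refine eLpNormEssSup_le_of_ae_enorm_bound (.of_forall fun z ↦ ?_)
  calc ‖fourierExtension Q f z‖ₑ ≤ eLpNorm f 1 volume := by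
        rw [eLpNorm_one_eq_lintegral_enorm]
        exact enorm_fourierExtension_le z
    _ ≤ eLpNorm f p volume :=
        eLpNorm_le_eLpNorm_of_support_subset hf.aestronglyMeasurable volume_unitCube hfS hp

variable [LinearOrder ι] {lam : ι → ι} {W : ℕ}

theorem exists_lintegral_enorm_fourierExtension_rpow_le (hlam : ∀ j, lam j ≤ j)
    (hW : ∀ j, Finset.card {i | lam i = j} ≤ W) {r s q : ℝ} (hs : 4 ≤ s) (hsW : W + 3 < s)
    (hsq : s < q) (hr : 1 < r) (hrq : r * (q - s + 1) = q) :
    ∃ C : ℝ≥0∞, C ≠ ⊤ ∧ ∀ f : (ι → ℝ) → ℂ, Measurable f → Integrable f →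
      Function.support f ⊆ unitCube ι → ∫⁻ ξ, ‖f ξ‖ₑ ^ r ≠ ⊤ →
        ∫⁻ z, ‖fourierExtension (monomialMap lam) f z‖ₑ ^ q ≤
          C * (∫⁻ ξ, ‖f ξ‖ₑ ^ r) ^ (q / r) := by
  obtain ⟨B, hB, hbound⟩ := exists_isExtensionBound hlam hW hs hsW
  have hQ : Measurable (monomialMap lam) := measurable_monomialMap
  refine ⟨ENNReal.ofReal q * (2 ^ s * B) * (2 ^ (q - s) / ENNReal.ofReal (q - s)),
    by simp [ENNReal.mul_eq_top, ENNReal.div_eq_top, hB, hsq], fun f hf hfi hfS hfr ↦ ?_⟩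
  refine lintegral_enorm_rpow_le_of_indicator_bounds hf hr hB (by linarith) hsq hrq hfr
    (fun S hS ↦ (measurable_fourierExtension hQ (hf.indicator hS)).aestronglyMeasurable)
    (fun S hS z ↦ ?_) fun S hS ↦ ?_
  · have hadd := fourierExtension_add hQ (hfi.indicator hS) (hfi.indicator hS.compl) z
    rw [Set.indicator_self_add_compl] at hadd
    rw [hadd, ← lintegral_comp_indicator hS.compl f (φ := (‖·‖ₑ)) enorm_zero]
    grw [enorm_add_le, enorm_fourierExtension_le (f := Sᶜ.indicator f)]
  · rw [← lintegral_comp_indicator hS f (φ := (‖·‖ₑ ^ s)) (by simp; linarith)]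
    exact hbound _ (hf.indicator hS) (hfi.indicator hS)
      (Set.support_indicator.trans_subset (Set.inter_subset_right.trans hfS))

theorem exists_eLpNorm_fourierExtension_ofReal_le (hlam : ∀ j, lam j ≤ j)
    (hW : ∀ j, Finset.card {i | lam i = j} ≤ W) {r s q : ℝ} (hs : 4 ≤ s) (hsW : W + 3 < s)
    (hsq : s < q) (hr : 1 < r) (hrq : r * (q - s + 1) = q) :
    ∃ C : ℝ≥0∞, C < ⊤ ∧ ∀ f : (ι → ℝ) → ℂ, Measurable f → Function.support f ⊆ unitCube ι →
      eLpNorm (fourierExtension (monomialMap lam) f) (ENNReal.ofReal q) volume ≤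
        C * eLpNorm f (ENNReal.ofReal r) volume := by
  obtain ⟨C, hC, hbound⟩ :=
    exists_lintegral_enorm_fourierExtension_rpow_le hlam hW hs hsW hsq hr hrq
  have hq0 : 0 < q := by linarith
  have hr0 : 0 < r := by linarith
  refine ⟨C ^ (1 / q) + 1, by finiteness, fun f hf hfS ↦ ?_⟩
  obtain hfr | hfr := eq_or_ne (eLpNorm f (ENNReal.ofReal r) volume) ⊤
  · simp [hfr, ENNReal.mul_top]
  have hfi : Integrable f := memLp_one_iff_integrable.1 ⟨hf.aestronglyMeasurable,
    (eLpNorm_le_eLpNorm_of_support_subset hf.aestronglyMeasurable volume_unitCube hfS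
      (ENNReal.one_le_ofReal.2 hr.le)).trans_lt hfr.lt_top⟩
  rw [eLpNorm_ofReal f hr0] at hfr ⊢
  rw [eLpNorm_ofReal _ hq0]
  calc _ ≤ (C * (∫⁻ ξ, ‖f ξ‖ₑ ^ r) ^ (q / r)) ^ (1 / q) := by
        gcongr
        exact hbound f hf hfi hfS fun h ↦ hfr (by rw [h, ENNReal.top_rpow_of_pos (by positivity)])
    _ = C ^ (1 / q) * (∫⁻ ξ, ‖f ξ‖ₑ ^ r) ^ (1 / r) := by
        rw [ENNReal.mul_rpow_of_nonneg _ _ (by positivity), ← ENNReal.rpow_mul]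
        congr 2
        field_simp
    _ ≤ (C ^ (1 / q) + 1) * (∫⁻ ξ, ‖f ξ‖ₑ ^ r) ^ (1 / r) := by
        gcongr
        exact le_self_add

theorem exists_eLpNorm_fourierExtension_monomialMap_le [Nonempty ι] (hlam : ∀ j, lam j ≤ j)
    (hW : ∀ j, Finset.card {i | lam i = j} ≤ W) {q : ℝ≥0∞} (hp : 1 ≤ p) (hq : W + 3 < q)
    (hpq : 1 / p + (W + 2) / q < 1) :
    ∃ C : ℝ≥0∞, C < ⊤ ∧ ∀ f : (ι → ℝ) → ℂ, Measurable f → Function.support f ⊆ unitCube ι →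
      eLpNorm (fourierExtension (monomialMap lam) f) q volume ≤ C * eLpNorm f p volume := by
  obtain rfl | hq_top := eq_or_ne q ⊤
  · exact ⟨1, ENNReal.one_lt_top, fun f hf hfS ↦ by
      rw [one_mul]
      exact eLpNorm_top_fourierExtension_le hf hfS hp⟩
  obtain ⟨r, s, hr, hrp, hsW, hsq, hrq⟩ := exists_interpolation_exponents hp hq_top hq hpq
  have hW1 : (1 : ℝ) ≤ W := by
    have hpos : 0 < Finset.card {i | lam i = lam (Classical.arbitrary ι)} :=
      Finset.card_pos.2 ⟨Classical.arbitrary ι, by simp⟩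
    exact_mod_cast hpos.trans_le (hW _)
  obtain ⟨C, hC, hbound⟩ :=
    exists_eLpNorm_fourierExtension_ofReal_le hlam hW (by linarith) hsW hsq hr hrq
  refine ⟨C, hC, fun f hf hfS ↦ ?_⟩
  grw [← ENNReal.ofReal_toReal hq_top, hbound f hf hfS,
    eLpNorm_le_eLpNorm_of_support_subset hf.aestronglyMeasurable volume_unitCube hfS hrp]

end LpBounds

section UnitCubeOperator

theorem measurePreserving_castAdd_natAdd (m n : ℕ) :
    MeasurePreserving fun X : Fin (m + n) → ℝ ↦
      (fun i ↦ X (Fin.castAdd n i), fun j ↦ X (Fin.natAdd m j)) := by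
  have hsum := (volume_measurePreserving_sumPiEquivProdPi_symm fun _ : Fin m ⊕ Fin n ↦ ℝ).symm
  exact hsum.comp (volume_measurePreserving_piCongrLeft (fun _ ↦ ℝ) finSumFinEquiv).symm

variable {d n : ℕ} {Q : (Fin d → ℝ) → Fin n → ℝ} {f : (Fin d → ℝ) → ℂ}

theorem extOp_eq_fourierExtension (hfS : Function.support f ⊆ Set.Icc 0 1) (X : Fin (d + n) → ℝ) :
    extOp d n Q f X = fourierExtension Q ((unitCube (Fin d)).indicator f)
      (fun i ↦ X (Fin.castAdd n i), fun j ↦ X (Fin.natAdd d j)) := by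
  have hcube : (unitCube (Fin d)).indicator f =ᵐ[volume] f := by
    have hIco : unitCube (Fin d) =ᵐ[volume] Set.Icc 0 1 := Measure.univ_pi_Ico_ae_eq_Icc
    simpa only [Set.indicator_eq_self.2 hfS] using indicator_ae_eq_of_ae_eq_set (f := f) hIco
  rw [extOp, fourierExtension, setIntegral_eq_integral_of_forall_compl_eq_zero fun ξ hξ ↦ by
    rw [Function.notMem_support.1 (mt (@hfS ξ) hξ), mul_zero]]
  refine integral_congr_ae (hcube.mono fun ξ hξ ↦ ?_)
  simp only [hξ, Circle.smul_def, Real.fourierChar_apply, dotProduct, smul_eq_mul]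
  push_cast
  ring_nf

theorem eLpNorm_extOp (hQ : Measurable Q) (hf : Measurable f)
    (hfS : Function.support f ⊆ Set.Icc 0 1) (q : ℝ≥0∞) :
    eLpNorm (extOp d n Q f) q volume =
      eLpNorm (fourierExtension Q ((unitCube (Fin d)).indicator f)) q volume := by
  rw [← eLpNorm_comp_measurePreserving (measurable_fourierExtension hQ
    (hf.indicator measurableSet_unitCube)).aestronglyMeasurable
    (measurePreserving_castAdd_natAdd d n), funext (extOp_eq_fourierExtension hfS)]
  rfl

end UnitCubeOperator

/-- sharp restriction estimates for the monomial surfaces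
`Q_j(ξ) = ξ_{λ_j} ξ_j` with `λ_j ≤ j` (here all indices are 0-indexed). -/
theorem statement0 (n : ℕ) (hn : 2 ≤ n)
    (lam : Fin n → Fin n) (hlam : ∀ j, (lam j : ℕ) ≤ (j : ℕ))
    (w : Fin n → ℕ)
    (hw : ∀ j, w j = (Finset.univ.filter (fun i => lam i = j)).card)
    (p q : ℝ≥0∞) (hp : 1 ≤ p) (hq : 1 ≤ q)
    (hq3 : ((Finset.univ.sup w : ℕ) : ℝ≥0∞) + 3 < q)
    (hpq : 1 / p + (((Finset.univ.sup w : ℕ) : ℝ≥0∞) + 2) / q < 1) :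
    ∃ C : ℝ≥0∞, C < ⊤ ∧
      ∀ f : (Fin n → ℝ) → ℂ, Measurable f →
        Function.support f ⊆ Set.Icc 0 1 →
        eLpNorm (extOp n n (fun ξ j => ξ (lam j) * ξ j) f) q volume ≤
          C * eLpNorm f p volume := by
  have : Nonempty (Fin n) := ⟨⟨0, by lia⟩⟩
  have hW (j : Fin n) : Finset.card {i | lam i = j} ≤ Finset.univ.sup w :=
    hw j ▸ Finset.le_sup (Finset.mem_univ j)
  obtain ⟨C, hC, hbound⟩ := exists_eLpNorm_fourierExtension_monomialMap_le hlam hW hp hq3 hpq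
  refine ⟨C, hC, fun f hf hfS ↦ ?_⟩
  calc eLpNorm (extOp n n (monomialMap lam) f) q volume
      = eLpNorm (fourierExtension (monomialMap lam) ((unitCube (Fin n)).indicator f)) q volume :=
        eLpNorm_extOp measurable_monomialMap hf hfS q
    _ ≤ C * eLpNorm ((unitCube (Fin n)).indicator f) p volume :=
        hbound _ (hf.indicator measurableSet_unitCube) Set.support_indicator_subset
    _ ≤ C * eLpNorm f p volume := by
        gcongr
        exact eLpNorm_indicator_le f
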